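/- arXiv:1311.0301 — 4 statements merged into one kernel-verified Lean document; each statement's English description precedes it below -/
import Mathlib

section
/- Let d ≥ 1, M > 2d+2, and C₁, c > 0. Then there exists C > 0, depending only on d, M, C₁, c, such that for every t ∈ (0,1], every nonempty bounded measurable set Q ⊆ ℝ^d with diam(Q) ≤ C₁ t and |Q| ≥ c t^d, and every continuously differentiable function u : ℝ^d → ℂ, one has ∫_{ℝ^d} |u(x) − u_Q|² ⟨dist(x,Q)/t⟩^{−M} dx ≤ C ∫_{ℝ^d} |t ∇u(x)|² ⟨dist(x,Q)/t⟩^{2d+2−M} dx, where u_Q := |Q|^{−1} ∫_Q u is the mean value of u over Q. -/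
open MeasureTheory Metric Set
open scoped ENNReal

/-- Cauchy–Schwarz against the constant function `1`. -/
lemma sq_lintegral_le_measure_univ_mul {α : Type*} [MeasurableSpace α] (μ : Measure α)
    {f : α → ℝ≥0∞} (hf : AEMeasurable f μ) :
    (∫⁻ a, f a ∂μ) ^ 2 ≤ μ univ * ∫⁻ a, f a ^ 2 ∂μ := by
  have h := ENNReal.lintegral_mul_le_Lp_mul_Lq μ Real.HolderConjugate.two_two
    (aemeasurable_const (b := (1 : ℝ≥0∞))) hf
  have hroot (a : ℝ≥0∞) : (a ^ (1 / 2 : ℝ)) ^ 2 = a := by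
    rw [← ENNReal.rpow_natCast, ← ENNReal.rpow_mul]
    norm_num
  simp only [Pi.mul_apply, lintegral_const, ENNReal.rpow_two, one_pow, one_mul] at h
  calc (∫⁻ a, f a ∂μ) ^ 2
      ≤ (μ univ ^ (1 / 2 : ℝ) * (∫⁻ a, f a ^ 2 ∂μ) ^ (1 / 2 : ℝ)) ^ 2 := by gcongr
    _ = μ univ * ∫⁻ a, f a ^ 2 ∂μ := by rw [mul_pow, hroot, hroot]

/-- The squared distance to a mean value is at most the mean of the squared distances. -/
lemma sq_enorm_sub_setAverage_le {α F : Type*} [MeasurableSpace α] [NormedAddCommGroup F]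
    [NormedSpace ℝ F] [CompleteSpace F] {μ : Measure α} {s : Set α} {f : α → F}
    (hf : IntegrableOn f s μ) (h0 : μ s ≠ 0) (htop : μ s ≠ ∞) (v : F) :
    ‖v - ⨍ y in s, f y ∂μ‖ₑ ^ 2 ≤ (μ s)⁻¹ * ∫⁻ y in s, ‖v - f y‖ₑ ^ 2 ∂μ := by
  have hreal : μ.real s ≠ 0 := (measureReal_ne_zero_iff htop).2 h0
  have hv : IntegrableOn (fun _ => v) s μ := integrableOn_const htop
  have havg : v - ⨍ y in s, f y ∂μ = (μ.real s)⁻¹ • ∫ y in s, (v - f y) ∂μ := by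
    rw [integral_sub hv hf, setIntegral_const, smul_sub, smul_smul, inv_mul_cancel₀ hreal,
      one_smul, setAverage_eq]
  have hnorm : ‖(μ.real s)⁻¹‖ₑ = (μ s)⁻¹ := by
    rw [enorm_inv hreal, Real.enorm_eq_ofReal measureReal_nonneg, ofReal_measureReal htop]
  have hmeas : AEMeasurable (fun y => ‖v - f y‖ₑ) (μ.restrict s) :=
    (hv.sub hf).aestronglyMeasurable.enorm
  rw [havg, enorm_smul, hnorm]
  calc ((μ s)⁻¹ * ‖∫ y in s, (v - f y) ∂μ‖ₑ) ^ 2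
      ≤ ((μ s)⁻¹ * ∫⁻ y in s, ‖v - f y‖ₑ ∂μ) ^ 2 := by
        gcongr
        exact enorm_integral_le_lintegral_enorm _
    _ = (μ s)⁻¹ ^ 2 * (∫⁻ y in s, ‖v - f y‖ₑ ∂μ) ^ 2 := mul_pow _ _ _
    _ ≤ (μ s)⁻¹ ^ 2 * (μ s * ∫⁻ y in s, ‖v - f y‖ₑ ^ 2 ∂μ) := by
        gcongr
        simpa using sq_lintegral_le_measure_univ_mul (μ.restrict s) hmeas
    _ = (μ s)⁻¹ * ∫⁻ y in s, ‖v - f y‖ₑ ^ 2 ∂μ := by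
        rw [sq, mul_assoc, ← mul_assoc (μ s)⁻¹ (μ s), ENNReal.inv_mul_cancel h0 htop, one_mul]

/-- A quadratic mean value inequality along a segment. -/
lemma sq_enorm_sub_le_lintegral_fderiv {E F : Type*} [NormedAddCommGroup E] [NormedSpace ℝ E]
    [NormedAddCommGroup F] [NormedSpace ℝ F] [CompleteSpace F] {u : E → F}
    (hu : ContDiff ℝ 1 u) (x y : E) :
    ‖u x - u y‖ₑ ^ 2 ≤
      ∫⁻ s in Ioc (0 : ℝ) 1, (‖fderiv ℝ u (x + s • (y - x))‖ₑ * ‖x - y‖ₑ) ^ 2 := by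
  have hderiv (s : ℝ) : HasDerivAt (fun s : ℝ => u (x + s • (y - x)))
      (fderiv ℝ u (x + s • (y - x)) (y - x)) s := by
    have h1 : HasDerivAt (fun s : ℝ => x + s • (y - x)) (y - x) s := by
      simpa using ((hasDerivAt_id s).smul_const (y - x)).const_add x
    exact ((hu.differentiable one_ne_zero).differentiableAt.hasFDerivAt).comp_hasDerivAt s h1
  have hfd : Continuous (fderiv ℝ u) := hu.continuous_fderiv one_ne_zero
  have hcont : Continuous fun s : ℝ => fderiv ℝ u (x + s • (y - x)) (y - x) := by fun_prop
  have hFTC := intervalIntegral.integral_eq_sub_of_hasDerivAt (fun s _ => hderiv s)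
    (hcont.intervalIntegrable 0 1)
  rw [intervalIntegral.integral_of_le zero_le_one] at hFTC
  simp only [one_smul, zero_smul, add_zero, add_sub_cancel] at hFTC
  rw [← enorm_neg, neg_sub, ← hFTC]
  calc ‖∫ s in Ioc (0 : ℝ) 1, fderiv ℝ u (x + s • (y - x)) (y - x)‖ₑ ^ 2
      ≤ (∫⁻ s in Ioc (0 : ℝ) 1, ‖fderiv ℝ u (x + s • (y - x)) (y - x)‖ₑ) ^ 2 := by
        gcongr
        exact enorm_integral_le_lintegral_enorm _
    _ ≤ ∫⁻ s in Ioc (0 : ℝ) 1, ‖fderiv ℝ u (x + s • (y - x)) (y - x)‖ₑ ^ 2 := by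
        simpa using sq_lintegral_le_measure_univ_mul (volume.restrict (Ioc (0 : ℝ) 1))
          hcont.enorm.measurable.aemeasurable
    _ ≤ _ := by
        gcongr with s
        rw [← enorm_neg (x - y), neg_sub]
        exact ContinuousLinearMap.le_opENorm _ _

section AffineChangeOfVariables

variable {E : Type*} [NormedAddCommGroup E] [NormedSpace ℝ E] [MeasurableSpace E] [BorelSpace E]
  [FiniteDimensional ℝ E] (μ : Measure E) [μ.IsAddHaarMeasure]

lemma lintegral_comp_add_smul {f : E → ℝ≥0∞} (hf : Measurable f) (v : E) {r : ℝ} (hr : r ≠ 0) :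
    ∫⁻ x, f (v + r • x) ∂μ =
      ENNReal.ofReal |(r ^ Module.finrank ℝ E)⁻¹| * ∫⁻ x, f x ∂μ := by
  have hmap : ∫⁻ x, f (v + r • x) ∂μ = ∫⁻ z, f (v + z) ∂(Measure.map (fun x => r • x) μ) :=
    (lintegral_map (by fun_prop : Measurable fun z => f (v + z)) (measurable_const_smul r)).symm
  rw [hmap, Measure.map_addHaar_smul μ hr, lintegral_smul_measure, lintegral_add_left_eq_self,
    smul_eq_mul]

lemma lintegral_comp_add_smul_le {f : E → ℝ≥0∞} (hf : Measurable f) (v : E) {r : ℝ}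
    (hr : 1 / 2 ≤ r) :
    ∫⁻ x, f (v + r • x) ∂μ ≤ 2 ^ Module.finrank ℝ E * ∫⁻ x, f x ∂μ := by
  have hr0 : 0 < r := by linarith
  rw [lintegral_comp_add_smul μ hf v hr0.ne']
  gcongr
  have h2 : (2 : ℝ≥0∞) ^ Module.finrank ℝ E = ENNReal.ofReal (2 ^ Module.finrank ℝ E) := by
    rw [ENNReal.ofReal_pow (by norm_num)]
    simp
  rw [h2, abs_of_pos (by positivity), ← inv_pow]
  refine ENNReal.ofReal_le_ofReal (pow_le_pow_left₀ (by positivity) ?_ _)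
  rw [inv_le_comm₀ hr0 two_pos]
  linarith

/-- Averaging `G` over the points of the segments that join a point of `s` to an arbitrary point
`x`, the latter with a bounded integrable weight `b`. -/
lemma lintegral_segment_le {b G : E → ℝ≥0∞} (hb : Measurable b) (hb1 : ∀ x, b x ≤ 1)
    (hG : Measurable G) (s : Set E) :
    ∫⁻ x, ∫⁻ y in s, (∫⁻ θ in Ioc (0 : ℝ) 1, b x * G (x + θ • (y - x))) ∂μ ∂μ ≤
      2 ^ Module.finrank ℝ E * (μ s + ∫⁻ x, b x ∂μ) * ∫⁻ z, G z ∂μ := by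
  have hpoint (θ : ℝ) :
      ∫⁻ x, ∫⁻ y in s, b x * G (x + θ • (y - x)) ∂μ ∂μ ≤
        2 ^ Module.finrank ℝ E * (μ s + ∫⁻ x, b x ∂μ) * ∫⁻ z, G z ∂μ := by
    rcases le_total θ (1 / 2) with hθ | hθ
    · rw [lintegral_lintegral_swap (by
        unfold Function.uncurry
        fun_prop)]
      calc ∫⁻ y in s, ∫⁻ x, b x * G (x + θ • (y - x)) ∂μ ∂μ
          ≤ ∫⁻ y in s, 2 ^ Module.finrank ℝ E * ∫⁻ z, G z ∂μ ∂μ := by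
            refine lintegral_mono fun y => ?_
            calc ∫⁻ x, b x * G (x + θ • (y - x)) ∂μ
                ≤ ∫⁻ x, G (θ • y + (1 - θ) • x) ∂μ := by
                  refine lintegral_mono fun x => ?_
                  rw [show x + θ • (y - x) = θ • y + (1 - θ) • x by module]
                  exact mul_le_of_le_one_left' (hb1 x)
              _ ≤ _ := lintegral_comp_add_smul_le μ hG _ (by linarith)
        _ = 2 ^ Module.finrank ℝ E * μ s * ∫⁻ z, G z ∂μ := by
            rw [setLIntegral_const]
            ring
        _ ≤ _ := by
            gcongr
            exact le_self_add
    · calc ∫⁻ x, ∫⁻ y in s, b x * G (x + θ • (y - x)) ∂μ ∂μ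
          ≤ ∫⁻ x, b x * (2 ^ Module.finrank ℝ E * ∫⁻ z, G z ∂μ) ∂μ := by
            refine lintegral_mono fun x => ?_
            calc ∫⁻ y in s, b x * G (x + θ • (y - x)) ∂μ
                ≤ ∫⁻ y, b x * G (x + θ • (y - x)) ∂μ := setLIntegral_le_lintegral _ _
              _ = b x * ∫⁻ y, G (x + θ • (y - x)) ∂μ := lintegral_const_mul _ (by fun_prop)
              _ ≤ _ := by
                gcongr
                simp_rw [show ∀ y, x + θ • (y - x) = (1 - θ) • x + θ • y from fun y => by module]
                exact lintegral_comp_add_smul_le μ hG _ hθ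
        _ = 2 ^ Module.finrank ℝ E * (∫⁻ x, b x ∂μ) * ∫⁻ z, G z ∂μ := by
            rw [lintegral_mul_const _ hb]
            ring
        _ ≤ _ := by
            gcongr
            exact le_add_self
  have hmeas : Measurable fun p : (E × ℝ) × E => b p.1.1 * G (p.1.1 + p.1.2 • (p.2 - p.1.1)) := by
    fun_prop
  calc ∫⁻ x, ∫⁻ y in s, (∫⁻ θ in Ioc (0 : ℝ) 1, b x * G (x + θ • (y - x))) ∂μ ∂μ
      = ∫⁻ x, (∫⁻ θ in Ioc (0 : ℝ) 1, ∫⁻ y in s, b x * G (x + θ • (y - x)) ∂μ) ∂μ := by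
        refine lintegral_congr fun x => lintegral_lintegral_swap ?_
        unfold Function.uncurry
        fun_prop
    _ = ∫⁻ θ in Ioc (0 : ℝ) 1, ∫⁻ x, ∫⁻ y in s, b x * G (x + θ • (y - x)) ∂μ ∂μ :=
        lintegral_lintegral_swap (hmeas.lintegral_prod_right' (ν := μ.restrict s)).aemeasurable
    _ ≤ ∫⁻ _ in Ioc (0 : ℝ) 1,
          2 ^ Module.finrank ℝ E * (μ s + ∫⁻ x, b x ∂μ) * ∫⁻ z, G z ∂μ :=
        lintegral_mono fun θ => hpoint θ
    _ = _ := by simp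

/-- Integrability of powers of `1 + dist(·, s) / t`, in a form uniform in `s` and `t`. -/
lemma lintegral_one_add_infDist_rpow_le {s : Set E} (hs : s.Nonempty)
    (hbdd : Bornology.IsBounded s) {t K m : ℝ} (ht : 0 < t) (hK : 0 ≤ K) (hm : 0 ≤ m)
    (hdiam : diam s ≤ K * t) :
    ∫⁻ x, ENNReal.ofReal ((1 + infDist x s / t) ^ (-m)) ∂μ ≤
      ENNReal.ofReal ((1 + K) ^ m) * ENNReal.ofReal (t ^ Module.finrank ℝ E) *
        ∫⁻ x, ENNReal.ofReal ((1 + ‖x‖) ^ (-m)) ∂μ := by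
  obtain ⟨q, hq⟩ := hs
  have hpoint (x : E) : ENNReal.ofReal ((1 + infDist x s / t) ^ (-m)) ≤
      ENNReal.ofReal ((1 + K) ^ m) *
        ENNReal.ofReal ((1 + ‖-(t⁻¹ • q) + t⁻¹ • x‖) ^ (-m)) := by
    rw [← ENNReal.ofReal_mul (by positivity)]
    refine ENNReal.ofReal_le_ofReal ?_
    have hnorm : ‖-(t⁻¹ • q) + t⁻¹ • x‖ = dist x q / t := by
      rw [show -(t⁻¹ • q) + t⁻¹ • x = t⁻¹ • (x - q) by module, norm_smul, Real.norm_eq_abs,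
        abs_of_pos (inv_pos.2 ht), dist_eq_norm]
      ring
    have hi : 0 ≤ infDist x s / t := div_nonneg infDist_nonneg ht.le
    have hle : 1 + dist x q / t ≤ (1 + K) * (1 + infDist x s / t) := by
      have h1 : dist x q / t ≤ infDist x s / t + K := by
        rw [div_add' _ _ _ ht.ne']
        gcongr
        linarith [dist_le_infDist_add_diam (x := x) hbdd hq]
      nlinarith [mul_nonneg hK hi]
    have hd : 0 ≤ dist x q / t := by positivity
    rw [hnorm, Real.rpow_neg (by positivity), Real.rpow_neg (by positivity), ← div_eq_mul_inv,
      inv_eq_one_div, div_le_div_iff₀ (by positivity) (by positivity), one_mul,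
      ← Real.mul_rpow (by positivity) (by positivity)]
    exact Real.rpow_le_rpow (by positivity) hle hm
  have hmeas : Measurable fun x : E => ENNReal.ofReal ((1 + ‖x‖) ^ (-m)) := by fun_prop
  calc ∫⁻ x, ENNReal.ofReal ((1 + infDist x s / t) ^ (-m)) ∂μ
      ≤ ∫⁻ x, ENNReal.ofReal ((1 + K) ^ m) *
          ENNReal.ofReal ((1 + ‖-(t⁻¹ • q) + t⁻¹ • x‖) ^ (-m)) ∂μ := lintegral_mono hpoint
    _ = _ := by
      rw [lintegral_const_mul _ (by fun_prop),
        lintegral_comp_add_smul μ hmeas _ (inv_ne_zero ht.ne'), ← mul_assoc, inv_pow, inv_inv,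
        abs_of_pos (by positivity)]

end AffineChangeOfVariables

/-- Transfer of the polynomial weight from a point with weight `ρ` to one with weight
`σ ≤ (1 + K) ρ`. -/
lemma sq_mul_rpow_le_of_weight_le {K t ρ σ D N M m : ℝ} (hK : 0 ≤ K) (hρ : 0 < ρ)
    (hσ : 0 < σ) (hσρ : σ ≤ (1 + K) * ρ) (hN : 0 ≤ N) (hNρ : N ≤ K * t * ρ)
    (hM : m + 2 ≤ M) :
    (D * N) ^ 2 * ρ ^ (-M) ≤
      K ^ 2 * (1 + K) ^ (M - m - 2) * (ρ ^ (-m) * ((t * D) ^ 2 * σ ^ (m + 2 - M))) := by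
  have h1 : N ^ 2 ≤ (K * t * ρ) ^ 2 := by gcongr
  have h2 : ρ ^ (-M) = (ρ ^ 2)⁻¹ * ρ ^ (-m) * (ρ ^ (M - m - 2))⁻¹ := by
    rw [← Real.rpow_neg hρ.le, ← Real.rpow_natCast, ← Real.rpow_neg hρ.le, ← Real.rpow_add hρ,
      ← Real.rpow_add hρ]
    congr 1
    push_cast
    ring
  have h3 : (ρ ^ (M - m - 2))⁻¹ ≤ (1 + K) ^ (M - m - 2) * σ ^ (m + 2 - M) := by
    rw [show m + 2 - M = -(M - m - 2) by ring, Real.rpow_neg hσ.le, ← div_eq_mul_inv,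
      inv_eq_one_div, div_le_div_iff₀ (by positivity) (by positivity), one_mul,
      ← Real.mul_rpow (by positivity) hρ.le]
    exact Real.rpow_le_rpow hσ.le hσρ (by linarith)
  calc (D * N) ^ 2 * ρ ^ (-M)
      = D ^ 2 * N ^ 2 * ρ ^ (-M) := by ring
    _ ≤ D ^ 2 * (K * t * ρ) ^ 2 * ρ ^ (-M) := by gcongr
    _ = K ^ 2 * (t * D) ^ 2 * ρ ^ (-m) * (ρ ^ (M - m - 2))⁻¹ := by
        rw [h2]
        field_simp
    _ ≤ K ^ 2 * (t * D) ^ 2 * ρ ^ (-m) * ((1 + K) ^ (M - m - 2) * σ ^ (m + 2 - M)) := by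
        gcongr
    _ = _ := by ring

lemma one_add_infDist_div_le_of_segment {E : Type*} [NormedAddCommGroup E] [NormedSpace ℝ E]
    {s : Set E} {x y : E} {θ t K : ℝ} (hy : y ∈ s) (hθ : θ ∈ Ioc (0 : ℝ) 1) (ht : 0 < t)
    (h : dist x y ≤ K * t * (1 + infDist x s / t)) :
    1 + infDist (x + θ • (y - x)) s / t ≤ (1 + K) * (1 + infDist x s / t) := by
  have hi : 0 ≤ infDist x s / t := div_nonneg infDist_nonneg ht.le
  have h1 : infDist (x + θ • (y - x)) s ≤ dist x y :=
    calc infDist (x + θ • (y - x)) s ≤ dist (x + θ • (y - x)) y := infDist_le_dist_of_mem hy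
      _ = (1 - θ) * dist x y := by
        rw [dist_eq_norm, show x + θ • (y - x) - y = (1 - θ) • (x - y) by module, norm_smul,
          Real.norm_eq_abs, abs_of_nonneg (by linarith [hθ.2]), dist_eq_norm]
      _ ≤ dist x y := mul_le_of_le_one_left dist_nonneg (by linarith [hθ.1])
  have h2 : infDist (x + θ • (y - x)) s / t ≤ K * (1 + infDist x s / t) := by
    rw [div_le_iff₀ ht]
    linarith
  linarith

/-- **Weighted Poincaré inequality** with weights `⟨dist(x,Q)/t⟩` adapted to a dyadic cube `Q`
of step size `t` (so `diam Q ≤ C₁ t` and `|Q| ≥ c t^d`), for exponents `M > 2d + 2`. -/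
theorem weighted_poincare_inequality
    (d : ℕ) (hd : 1 ≤ d) (M C₁ c : ℝ)
    (hM : 2 * (d : ℝ) + 2 < M) (hC₁ : 0 < C₁) (hc : 0 < c) :
    ∃ C > 0, ∀ t : ℝ, 0 < t → t ≤ 1 →
      ∀ Q : Set (EuclideanSpace ℝ (Fin d)),
      Q.Nonempty → MeasurableSet Q → Bornology.IsBounded Q →
      Metric.diam Q ≤ C₁ * t → ENNReal.ofReal (c * t ^ d) ≤ volume Q →
      ∀ u : EuclideanSpace ℝ (Fin d) → ℂ, ContDiff ℝ 1 u →
        ∫⁻ x, ENNReal.ofReal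
            (‖u x - ⨍ y in Q, u y‖ ^ 2 * (1 + infDist x Q / t) ^ (-M)) ≤
          ENNReal.ofReal C *
            ∫⁻ x, ENNReal.ofReal
              (‖t • fderiv ℝ u x‖ ^ 2 * (1 + infDist x Q / t) ^ (2 * (d : ℝ) + 2 - M)) := by
  set m : ℝ := 2 * (d : ℝ)
  have hd1 : (1 : ℝ) ≤ d := by exact_mod_cast hd
  have hm : 0 ≤ m := by positivity
  obtain ⟨I, hI0, hI⟩ : ∃ I : ℝ, 0 ≤ I ∧
      ∫⁻ x : EuclideanSpace ℝ (Fin d), ENNReal.ofReal ((1 + ‖x‖) ^ (-m)) = ENNReal.ofReal I := by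
    refine ⟨_, ENNReal.toReal_nonneg, (ENNReal.ofReal_toReal ?_).symm⟩
    refine (finite_integral_one_add_norm ?_).ne
    rw [finrank_euclideanSpace_fin]
    linarith
  set K : ℝ := 1 + C₁
  have hK : 0 < K := by positivity
  set A : ℝ := K ^ 2 * (1 + K) ^ (M - m - 2)
  have hA : 0 < A := by positivity
  refine ⟨A * (2 ^ d * (1 + (1 + K) ^ m * I / c)), by positivity, ?_⟩
  intro t ht _ Q hQne hQm hQb hQd hQv u hu
  have hV0 : volume Q ≠ 0 :=
    ((ENNReal.ofReal_pos.2 (by positivity : 0 < c * t ^ d)).trans_le hQv).ne'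
  have hVtop : volume Q ≠ ∞ := hQb.measure_lt_top.ne
  have hu_int : IntegrableOn u Q volume :=
    (hu.continuous.continuousOn.integrableOn_compact hQb.isCompact_closure).mono_set
      subset_closure
  have hfd : Continuous (fderiv ℝ u) := hu.continuous_fderiv one_ne_zero
  have hρ1 (x : EuclideanSpace ℝ (Fin d)) : 1 ≤ 1 + infDist x Q / t :=
    le_add_of_nonneg_right (div_nonneg infDist_nonneg ht.le)
  have hρ0 (x : EuclideanSpace ℝ (Fin d)) : 0 < 1 + infDist x Q / t :=
    one_pos.trans_le (hρ1 x)
  set b : EuclideanSpace ℝ (Fin d) → ℝ≥0∞ :=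
    fun x => ENNReal.ofReal ((1 + infDist x Q / t) ^ (-m))
  set G : EuclideanSpace ℝ (Fin d) → ℝ≥0∞ := fun x => ENNReal.ofReal
    (‖t • fderiv ℝ u x‖ ^ 2 * (1 + infDist x Q / t) ^ (m + 2 - M))
  have hbm : Measurable b := by fun_prop
  have hb1 (x : EuclideanSpace ℝ (Fin d)) : b x ≤ 1 :=
    ENNReal.ofReal_le_one.2 (Real.rpow_le_one_of_one_le_of_nonpos (hρ1 x) (by linarith))
  have hGm : Measurable G := by
    have : Measurable fun x => ‖t • fderiv ℝ u x‖ := (hfd.const_smul t).norm.measurable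
    fun_prop
  have hdist (x y : EuclideanSpace ℝ (Fin d)) (hy : y ∈ Q) :
      dist x y ≤ K * t * (1 + infDist x Q / t) := by
    have h1 := dist_le_infDist_add_diam (x := x) hQb hy
    have h2 : 0 ≤ infDist x Q := infDist_nonneg
    have h3 : K * t * (1 + infDist x Q / t) = K * t + K * infDist x Q := by
      field_simp
    rw [h3]
    nlinarith [mul_nonneg hC₁.le h2]
  have hsegment (x y : EuclideanSpace ℝ (Fin d)) (hy : y ∈ Q) (θ : ℝ) (hθ : θ ∈ Ioc (0 : ℝ) 1) :
      ENNReal.ofReal ((1 + infDist x Q / t) ^ (-M)) *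
          (‖fderiv ℝ u (x + θ • (y - x))‖ₑ * ‖x - y‖ₑ) ^ 2 ≤
        ENNReal.ofReal A * (b x * G (x + θ • (y - x))) := by
    have hkey := sq_mul_rpow_le_of_weight_le (D := ‖fderiv ℝ u (x + θ • (y - x))‖) (t := t)
      hK.le (hρ0 x) (hρ0 (x + θ • (y - x)))
      (one_add_infDist_div_le_of_segment hy hθ ht (hdist x y hy)) dist_nonneg (hdist x y hy)
      (M := M) (m := m) (by linarith)
    rw [← ofReal_norm, ← ofReal_norm, ← ENNReal.ofReal_mul (norm_nonneg _),
      ← ENNReal.ofReal_pow (by positivity),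
      ← ENNReal.ofReal_mul (Real.rpow_nonneg (hρ0 x).le _),
      ← ENNReal.ofReal_mul (Real.rpow_nonneg (hρ0 x).le _), ← ENNReal.ofReal_mul hA.le,
      norm_smul, Real.norm_eq_abs, abs_of_pos ht, ← dist_eq_norm]
    refine ENNReal.ofReal_le_ofReal ?_
    linarith
  have hpoint (x : EuclideanSpace ℝ (Fin d)) :
      ENNReal.ofReal (‖u x - ⨍ y in Q, u y‖ ^ 2 * (1 + infDist x Q / t) ^ (-M)) ≤
        (volume Q)⁻¹ * (ENNReal.ofReal A *
          ∫⁻ y in Q, ∫⁻ θ in Ioc (0 : ℝ) 1, b x * G (x + θ • (y - x))) := by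
    rw [ENNReal.ofReal_mul (by positivity), ENNReal.ofReal_pow (norm_nonneg _),
      ofReal_norm, mul_comm]
    calc ENNReal.ofReal ((1 + infDist x Q / t) ^ (-M)) * ‖u x - ⨍ y in Q, u y‖ₑ ^ 2
        ≤ ENNReal.ofReal ((1 + infDist x Q / t) ^ (-M)) *
            ((volume Q)⁻¹ * ∫⁻ y in Q, ‖u x - u y‖ₑ ^ 2) := by
          gcongr
          exact sq_enorm_sub_setAverage_le hu_int hV0 hVtop (u x)
      _ = (volume Q)⁻¹ *
            ∫⁻ y in Q, ENNReal.ofReal ((1 + infDist x Q / t) ^ (-M)) * ‖u x - u y‖ₑ ^ 2 := by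
          rw [lintegral_const_mul' _ _ ENNReal.ofReal_ne_top]
          ring
      _ ≤ _ := by
          gcongr
          rw [← lintegral_const_mul' _ _ ENNReal.ofReal_ne_top]
          refine setLIntegral_mono' hQm fun y hy => ?_
          rw [← lintegral_const_mul' _ _ ENNReal.ofReal_ne_top]
          refine (mul_le_mul_right (sq_enorm_sub_le_lintegral_fderiv hu x y) _).trans ?_
          rw [← lintegral_const_mul' _ _ ENNReal.ofReal_ne_top]
          exact setLIntegral_mono' measurableSet_Ioc fun θ hθ => hsegment x y hy θ hθ
  have hb_int : (volume Q)⁻¹ * ∫⁻ x, b x ≤ ENNReal.ofReal ((1 + K) ^ m * I / c) := by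
    have h := lintegral_one_add_infDist_rpow_le volume hQne hQb ht hK.le hm
      (hQd.trans (by gcongr; linarith))
    rw [hI, finrank_euclideanSpace_fin, ← ENNReal.ofReal_mul (by positivity),
      ← ENNReal.ofReal_mul (by positivity)] at h
    calc (volume Q)⁻¹ * ∫⁻ x, b x
        ≤ (ENNReal.ofReal (c * t ^ d))⁻¹ * ENNReal.ofReal ((1 + K) ^ m * t ^ d * I) := by
          gcongr
      _ = ENNReal.ofReal ((1 + K) ^ m * I / c) := by
          rw [← ENNReal.ofReal_inv_of_pos (by positivity), ← ENNReal.ofReal_mul (by positivity)]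
          congr 1
          field_simp
  have hVinv : (volume Q)⁻¹ ≠ ∞ := ENNReal.inv_ne_top.2 hV0
  calc ∫⁻ x, ENNReal.ofReal (‖u x - ⨍ y in Q, u y‖ ^ 2 * (1 + infDist x Q / t) ^ (-M))
      ≤ ∫⁻ x, (volume Q)⁻¹ * (ENNReal.ofReal A *
          ∫⁻ y in Q, ∫⁻ θ in Ioc (0 : ℝ) 1, b x * G (x + θ • (y - x))) := lintegral_mono hpoint
    _ = (volume Q)⁻¹ * (ENNReal.ofReal A *
          ∫⁻ x, ∫⁻ y in Q, ∫⁻ θ in Ioc (0 : ℝ) 1, b x * G (x + θ • (y - x))) := by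
        rw [lintegral_const_mul' _ _ hVinv, lintegral_const_mul' _ _ ENNReal.ofReal_ne_top]
    _ ≤ (volume Q)⁻¹ * (ENNReal.ofReal A *
          (2 ^ d * (volume Q + ∫⁻ x, b x) * ∫⁻ z, G z)) := by
        gcongr
        simpa only [finrank_euclideanSpace_fin] using lintegral_segment_le volume hbm hb1 hGm Q
    _ = ENNReal.ofReal A * (2 ^ d * (1 + (volume Q)⁻¹ * ∫⁻ x, b x)) * ∫⁻ z, G z := by
        rw [← ENNReal.inv_mul_cancel hV0 hVtop]
        ring
    _ ≤ ENNReal.ofReal A * (2 ^ d * (1 + ENNReal.ofReal ((1 + K) ^ m * I / c))) *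
          ∫⁻ z, G z := by
        gcongr
    _ = _ := by
        rw [ENNReal.ofReal_mul hA.le, ENNReal.ofReal_mul (p := 2 ^ d) (by positivity),
          ENNReal.ofReal_add zero_le_one (by positivity), ENNReal.ofReal_one,
          ENNReal.ofReal_pow zero_le_two, ENNReal.ofReal_ofNat]
end

section
/- Let d, N ≥ 1 and let Ω ⊆ ℝ^d be open. Let Υ be a linear operator in L²(Ω; ℂ^N) with domain D(Υ) ⊆ L²(Ω; ℂ^N), and let K > 0 be such that: (i) for every φ ∈ C_c^∞(ℝ^d; ℂ) and every u ∈ D(Υ) one has φu ∈ D(Υ) and |Υ(φu) − φ·Υu| ≤ K |∇φ| |u| almost everywhere on Ω; (ii) for every open ball B centered at a point of Ω and every u ∈ D(Υ) with compact support contained in B ∩ Ω one has |∫_Ω Υu| ≤ K |B|^{1/2} ‖u‖_{L²(Ω;ℂ^N)}. Let η ∈ (0,1], C₁, C₂, c > 0, let t ∈ (0,1], and let Q ⊆ Ω be a measurable set with |Q| ≥ c t^d, contained in an open ball B(z, C₁ t) with z ∈ Ω, and satisfying |{x ∈ Q : dist(x, ℝ^d ∖ Q) ≤ r}| ≤ C₂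 (r/t)^{η} |Q| for all r > 0. Then there exists a constant C, depending only on d, N, K, η, C₁, C₂, c (and not on t, Q, u), such that for all u ∈ D(Υ): |⨍_Q Υu|² ≤ C [ t^{−η} (⨍_Q |u|²)^{η/2} (⨍_Q |Υu|²)^{1−η/2} + ⨍_Q |u|² ]. -/
open MeasureTheory Metric Set
open scoped ENNReal

/-- A smooth cutoff function vanishing near `A`, equal to one at distance more than `r` from `A`,
with gradient bounded by `4 / r`. -/
lemma exists_contDiff_cutoff {E : Type*} [NormedAddCommGroup E] [InnerProductSpace ℝ E]
    [FiniteDimensional ℝ E] (A : Set E) {r : ℝ} (hr : 0 < r) :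
    ∃ φ : E → ℝ, ContDiff ℝ (⊤ : ℕ∞) φ ∧ (∀ x, 0 ≤ φ x) ∧ (∀ x, φ x ≤ 1) ∧
      (∀ x, r < infDist x A → φ x = 1) ∧ (∀ x, infDist x A ≤ r / 4 → φ x = 0) ∧
      ∀ x y, |φ x - φ y| ≤ 4 / r * dist x y := by
  borelize E
  let μ : Measure E := Measure.addHaar
  let g : E → ℝ := fun x => min 1 (max 0 (4 / r * infDist x A - 2))
  have hgc : Continuous g := by
    have := continuous_infDist_pt A
    fun_prop
  have hg0 : ∀ x, 0 ≤ g x := fun x => le_min zero_le_one (le_max_left _ _)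
  have hg1 : ∀ x, g x ≤ 1 := fun x => min_le_left _ _
  have hgL : ∀ x y, |g x - g y| ≤ 4 / r * dist x y := by
    intro x y
    have h1 : |infDist x A - infDist y A| ≤ dist x y := by
      simpa [Real.dist_eq] using (lipschitz_infDist_pt A).dist_le_mul x y
    calc |g x - g y| ≤ |max 0 (4 / r * infDist x A - 2) - max 0 (4 / r * infDist y A - 2)| :=
          abs_min_sub_min_le_max _ _ _ _ |>.trans (by simp)
      _ ≤ |(4 / r * infDist x A - 2) - (4 / r * infDist y A - 2)| :=
          abs_max_sub_max_le_max _ _ _ _ |>.trans (by simp)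
      _ = 4 / r * |infDist x A - infDist y A| := by
          rw [show (4 / r * infDist x A - 2) - (4 / r * infDist y A - 2)
            = 4 / r * (infDist x A - infDist y A) by ring, abs_mul, abs_of_pos (by positivity)]
      _ ≤ 4 / r * dist x y := by gcongr
  let b : ContDiffBump (0 : E) := ⟨r / 8, r / 4, by positivity, by linarith⟩
  have hbR : b.rOut = r / 4 := rfl
  have hint : ∀ x, Integrable (fun s => b.normed μ s * g (x - s)) μ := by
    intro x
    exact ((b.continuous_normed (μ := μ)).mul (by fun_prop)).integrable_of_hasCompactSupport
      b.hasCompactSupport_normed.mul_right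
  let φ : E → ℝ := convolution (b.normed μ) g (ContinuousLinearMap.lsmul ℝ ℝ) μ
  have hφ : ∀ x, φ x = ∫ s, b.normed μ s * g (x - s) ∂μ := fun x => rfl
  refine ⟨φ, ?_, ?_, ?_, ?_, ?_, ?_⟩
  · exact b.hasCompactSupport_normed.contDiff_convolution_left _ b.contDiff_normed
      hgc.locallyIntegrable
  · intro x
    rw [hφ]
    exact integral_nonneg fun s => mul_nonneg (b.nonneg_normed s) (hg0 _)
  · intro x
    rw [hφ, ← b.integral_normed (μ := μ)]
    exact integral_mono (hint x) b.integrable_normed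
      fun s => mul_le_of_le_one_right (b.nonneg_normed s) (hg1 _)
  · intro x hx
    have key : ∀ y ∈ ball x b.rOut, g y = 1 := by
      intro y hy
      rw [hbR, mem_ball'] at hy
      have := infDist_le_infDist_add_dist (s := A) (x := x) (y := y)
      have h3 : 3 * r / 4 ≤ infDist y A := by linarith
      have : 3 ≤ 4 / r * infDist y A := by
        calc (3 : ℝ) = 4 / r * (3 * r / 4) := by field_simp
          _ ≤ _ := by gcongr
      exact min_eq_left (le_max_of_le_right (by linarith))
    have hx1 := key x (mem_ball_self b.rOut_pos)
    change convolution (b.normed μ) g (ContinuousLinearMap.lsmul ℝ ℝ) μ x = 1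
    rw [b.normed_convolution_eq_right (fun y hy => by rw [key y hy, hx1]), hx1]
  · intro x hx
    have key : ∀ y ∈ ball x b.rOut, g y = 0 := by
      intro y hy
      rw [hbR, mem_ball] at hy
      have := infDist_le_infDist_add_dist (s := A) (x := y) (y := x)
      have h3 : infDist y A ≤ r / 2 := by linarith
      have : 4 / r * infDist y A ≤ 2 := by
        calc 4 / r * infDist y A ≤ 4 / r * (r / 2) := by gcongr
          _ = 2 := by field_simp; norm_num
      simp only [g]
      rw [max_eq_left (by linarith)]
      norm_num
    have hx1 := key x (mem_ball_self b.rOut_pos)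
    change convolution (b.normed μ) g (ContinuousLinearMap.lsmul ℝ ℝ) μ x = 0
    rw [b.normed_convolution_eq_right (fun y hy => by rw [key y hy, hx1]), hx1]
  · intro x y
    rw [hφ, hφ, ← integral_sub (hint x) (hint y), ← Real.norm_eq_abs]
    calc ‖∫ s, (b.normed μ s * g (x - s) - b.normed μ s * g (y - s)) ∂μ‖
        ≤ ∫ s, b.normed μ s * (4 / r * dist x y) ∂μ := by
          refine norm_integral_le_of_norm_le (b.integrable_normed.mul_const _) ?_
          refine Filter.Eventually.of_forall fun s => ?_
          rw [← mul_sub, norm_mul, Real.norm_of_nonneg (b.nonneg_normed s), Real.norm_eq_abs]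
          refine mul_le_mul_of_nonneg_left ?_ (b.nonneg_normed s)
          simpa using hgL (x - s) (y - s)
      _ = 4 / r * dist x y := by
          rw [integral_mul_const, b.integral_normed, one_mul]

/-- Cauchy–Schwarz inequality for the integral of a norm over a set. -/
lemma setIntegral_norm_le_sqrt_mul_sqrt {α E : Type*} [MeasurableSpace α] {μ : Measure α}
    [NormedAddCommGroup E] {f : α → E} {s Q : Set α} (hf : MemLp f 2 μ) (hsQ : s ⊆ Q)
    (hs : μ s ≠ ∞) :
    ∫ x in s, ‖f x‖ ∂μ ≤ √(μ.real s) * √(∫ x in Q, ‖f x‖ ^ 2 ∂μ) := by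
  have : Fact (μ s < ∞) := ⟨hs.lt_top⟩
  have h := integral_mul_norm_le_Lp_mul_Lq (μ := μ.restrict s) (f := fun _ : α => (1 : ℝ))
    (g := fun x => ‖f x‖) Real.HolderConjugate.two_two
    (by simpa using memLp_const (1 : ℝ)) (by simpa using (hf.restrict s).norm)
  simp only [norm_norm, norm_one, one_mul, one_pow, integral_const, measureReal_restrict_apply_univ,
    smul_eq_mul, mul_one, ← Real.sqrt_eq_rpow, Real.rpow_two] at h
  refine h.trans ?_
  refine mul_le_mul_of_nonneg_left (Real.sqrt_le_sqrt ?_) (Real.sqrt_nonneg _)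
  exact setIntegral_mono_set (hf.integrable_norm_pow two_ne_zero).integrableOn
    (Filter.Eventually.of_forall fun x => by positivity) hsQ.eventuallyLE

/-- Optimisation over the width parameter `ε` in the splitting estimate. -/
lemma sq_le_of_forall_splitting {m X Y t η a b k : ℝ} (hm : 0 ≤ m) (hX : 0 ≤ X) (hY : 0 ≤ Y)
    (ht : 0 < t) (hη0 : 0 < η) (hη1 : η ≤ 1) (ha : 0 ≤ a) (hb : 0 ≤ b) (hk : 0 ≤ k)
    (h : ∀ ε : ℝ, 0 < ε → m ≤ a * X + b * ε ^ (η / 2) * (k * X / (ε * t) + Y)) :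
    m ^ 2 ≤ (2 * a ^ 2 + 2 * (b * (k + 1)) ^ 2) *
      (t ^ (-η) * (X ^ 2) ^ (η / 2) * (Y ^ 2) ^ (1 - η / 2) + X ^ 2) := by
  have key : ∀ δ : ℝ, 0 < δ → m ^ 2 ≤ (2 * a ^ 2 + 2 * (b * (k + 1)) ^ 2) *
      (t ^ (-η) * ((X + δ) ^ 2) ^ (η / 2) * ((Y + δ) ^ 2) ^ (1 - η / 2) + (X + δ) ^ 2) := by
    intro δ hδ
    obtain ⟨X', hX'⟩ : ∃ X', X' = X + δ := ⟨_, rfl⟩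
    obtain ⟨Y', hY'⟩ : ∃ Y', Y' = Y + δ := ⟨_, rfl⟩
    rw [← hX', ← hY']
    have hXp : 0 < X' := by linarith
    have hYp : 0 < Y' := by linarith
    have hXX : X ≤ X' := by linarith
    have hYY : Y ≤ Y' := by linarith
    obtain ⟨ε, hε⟩ : ∃ ε, ε = X' / (t * Y') := ⟨_, rfl⟩
    have hεp : 0 < ε := by rw [hε]; positivity
    have h1 : m ≤ a * X' + b * ε ^ (η / 2) * ((k + 1) * Y') := by
      refine (h ε hεp).trans ?_
      have h2 : k * X / (ε * t) + Y ≤ (k + 1) * Y' := by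
        calc k * X / (ε * t) + Y ≤ k * X' / (ε * t) + Y' := by gcongr
          _ = (k + 1) * Y' := by rw [hε]; field_simp
      gcongr
    have h3 : (ε ^ (η / 2) * Y') ^ 2
        = t ^ (-η) * (X' ^ 2) ^ (η / 2) * (Y' ^ 2) ^ (1 - η / 2) := by
      have e1 : (X' ^ 2) ^ (η / 2) = X' ^ η := by
        rw [← Real.rpow_natCast_mul hXp.le]; congr 1; push_cast; ring
      have e2 : (Y' ^ 2) ^ (1 - η / 2) = Y' ^ 2 / Y' ^ η := by
        rw [← Real.rpow_natCast_mul hYp.le,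
          show ((2 : ℕ) : ℝ) * (1 - η / 2) = (2 : ℕ) - η by push_cast; ring,
          Real.rpow_sub hYp, Real.rpow_natCast]
      have e3 : (ε ^ (η / 2)) ^ 2 = ε ^ η := by
        rw [← Real.rpow_mul_natCast hεp.le]; congr 1; push_cast; ring
      rw [mul_pow, e1, e2, e3, hε, Real.div_rpow hXp.le (by positivity),
        Real.mul_rpow ht.le hYp.le, Real.rpow_neg ht.le]
      field_simp
    rw [← h3]
    have hZ : 0 ≤ ε ^ (η / 2) * Y' := by positivity
    have hm' : m ≤ a * X' + b * (k + 1) * (ε ^ (η / 2) * Y') := by linarith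
    have hc1 : 0 ≤ a ^ 2 * (ε ^ (η / 2) * Y') ^ 2 := by positivity
    have hc2 : 0 ≤ (b * (k + 1)) ^ 2 * X' ^ 2 := by positivity
    have hsq := pow_le_pow_left₀ hm hm' 2
    nlinarith [sq_nonneg (a * X' - b * (k + 1) * (ε ^ (η / 2) * Y'))]
  have hlim : Filter.Tendsto (fun δ : ℝ => (2 * a ^ 2 + 2 * (b * (k + 1)) ^ 2) *
      (t ^ (-η) * ((X + δ) ^ 2) ^ (η / 2) * ((Y + δ) ^ 2) ^ (1 - η / 2) + (X + δ) ^ 2))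
      (nhdsWithin 0 (Ioi 0)) (nhds ((2 * a ^ 2 + 2 * (b * (k + 1)) ^ 2) *
      (t ^ (-η) * (X ^ 2) ^ (η / 2) * (Y ^ 2) ^ (1 - η / 2) + X ^ 2))) := by
    refine tendsto_nhdsWithin_of_tendsto_nhds ?_
    have c1 : Continuous fun δ : ℝ => ((X + δ) ^ 2) ^ (η / 2) :=
      Continuous.rpow_const (by fun_prop) fun _ => Or.inr (by linarith)
    have c2 : Continuous fun δ : ℝ => ((Y + δ) ^ 2) ^ (1 - η / 2) :=
      Continuous.rpow_const (by fun_prop) fun _ => Or.inr (by linarith)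
    refine Continuous.tendsto' (by fun_prop) _ _ (by simp)
  exact ge_of_tendsto hlim (Filter.eventually_of_mem self_mem_nhdsWithin key)

/-- A square-integrable function is integrable on sets of finite measure. -/
lemma MeasureTheory.MemLp.integrableOn_of_measure_ne_top {α E : Type*} [MeasurableSpace α]
    {μ : Measure α} [NormedAddCommGroup E] {f : α → E} {A : Set α} (hf : MemLp f 2 μ)
    (hA : μ A ≠ ∞) : IntegrableOn f A μ := by
  have : Fact (μ A < ∞) := ⟨hA.lt_top⟩
  exact (hf.restrict A).integrable one_le_two

/-- Splitting estimate: if `G` is a localisation of `F` that vanishes off `Q`, agrees with `F` on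
`Q \ S`, and differs from `F` by at most `M |u| + |F|` on `S`, then the integral of `F` over `Q`
is controlled by the integral of `G` and the measure of `S`. -/
lemma norm_setIntegral_le_of_localisation {α E E' : Type*} [MeasurableSpace α] {μ : Measure α}
    [NormedAddCommGroup E] [NormedSpace ℝ E] [NormedAddCommGroup E'] {F G : α → E} {u : α → E'}
    {S Q : Set α} {M : ℝ} (hM : 0 ≤ M) (hF : MemLp F 2 μ) (hG : MemLp G 2 μ) (hu : MemLp u 2 μ)
    (hQ : MeasurableSet Q) (hSQ : S ⊆ Q) (hQfin : μ Q ≠ ∞)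
    (hoff : ∀ᵐ x ∂μ, x ∉ Q → G x = 0) (heq : ∀ᵐ x ∂μ, x ∈ Q → x ∉ S → F x = G x)
    (hdiff : ∀ᵐ x ∂μ, ‖F x - G x‖ ≤ M * ‖u x‖ + ‖F x‖) :
    ‖∫ x in Q, F x ∂μ‖ ≤ ‖∫ x, G x ∂μ‖ +
      √(μ.real S) * (M * √(∫ x in Q, ‖u x‖ ^ 2 ∂μ) + √(∫ x in Q, ‖F x‖ ^ 2 ∂μ)) := by
  have hSfin : μ S ≠ ∞ := measure_ne_top_of_subset hSQ hQfin
  have hsplit : ∫ x in Q, F x ∂μ = ∫ x, G x ∂μ + ∫ x in S, (F x - G x) ∂μ := by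
    have e1 : ∫ x in Q, (F x - G x) ∂μ = ∫ x in S, (F x - G x) ∂μ := by
      refine setIntegral_eq_of_subset_of_ae_sdiff_eq_zero hQ.nullMeasurableSet hSQ ?_
      filter_upwards [heq] with x hx hxQ
      rw [hx hxQ.1 hxQ.2, sub_self]
    rw [← e1, ← setIntegral_eq_integral_of_ae_compl_eq_zero hoff,
      integral_sub (hF.integrableOn_of_measure_ne_top hQfin)
        (hG.integrableOn_of_measure_ne_top hQfin), add_sub_cancel]
  have hiu : IntegrableOn (fun x => ‖u x‖) S μ := (hu.integrableOn_of_measure_ne_top hSfin).norm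
  have hiF : IntegrableOn (fun x => ‖F x‖) S μ := (hF.integrableOn_of_measure_ne_top hSfin).norm
  have hrem : ‖∫ x in S, (F x - G x) ∂μ‖ ≤
      √(μ.real S) * (M * √(∫ x in Q, ‖u x‖ ^ 2 ∂μ) + √(∫ x in Q, ‖F x‖ ^ 2 ∂μ)) := by
    calc ‖∫ x in S, (F x - G x) ∂μ‖ ≤ ∫ x in S, (M * ‖u x‖ + ‖F x‖) ∂μ :=
          norm_integral_le_of_norm_le ((hiu.const_mul M).add hiF) (ae_restrict_of_ae hdiff)
      _ = M * ∫ x in S, ‖u x‖ ∂μ + ∫ x in S, ‖F x‖ ∂μ := by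
          rw [integral_add (hiu.const_mul M) hiF, integral_const_mul]
      _ ≤ M * (√(μ.real S) * √(∫ x in Q, ‖u x‖ ^ 2 ∂μ)) +
            √(μ.real S) * √(∫ x in Q, ‖F x‖ ^ 2 ∂μ) := by
          gcongr
          · exact setIntegral_norm_le_sqrt_mul_sqrt hu hSQ hSfin
          · exact setIntegral_norm_le_sqrt_mul_sqrt hF hSQ hSfin
      _ = _ := by ring
  rw [hsplit]
  exact (norm_add_le _ _).trans (by gcongr)

/-- The norm of an `L²` function that is dominated by `u` on `Q` and vanishes off `Q`. -/
lemma norm_Lp_two_le_sqrt_setIntegral {α E : Type*} [MeasurableSpace α] {μ : Measure α}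
    [NormedAddCommGroup E] (w u : Lp E 2 μ) {Q : Set α}
    (hw : ∀ᵐ x ∂μ, ‖w x‖ ≤ ‖u x‖) (hoff : ∀ᵐ x ∂μ, x ∉ Q → w x = 0) :
    ‖w‖ ≤ √(∫ x in Q, ‖u x‖ ^ 2 ∂μ) := by
  have h1 : ‖w‖ = √(∫ x, ‖w x‖ ^ 2 ∂μ) := by
    rw [Lp.norm_def, (Lp.memLp w).eLpNorm_eq_integral_rpow_norm two_ne_zero ENNReal.ofNat_ne_top,
      ENNReal.toReal_ofReal (by positivity), Real.sqrt_eq_rpow]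
    simp
  rw [h1]
  refine Real.sqrt_le_sqrt ?_
  have hoff' : ∀ᵐ x ∂μ, x ∉ Q → ‖w x‖ ^ 2 = 0 := by
    filter_upwards [hoff] with x hx hxQ
    simp [hx hxQ]
  rw [← setIntegral_eq_integral_of_ae_compl_eq_zero hoff']
  refine integral_mono_ae ((Lp.memLp w).integrable_norm_pow two_ne_zero).integrableOn
    ((Lp.memLp u).integrable_norm_pow two_ne_zero).integrableOn (ae_restrict_of_ae ?_)
  filter_upwards [hw] with x hx
  gcongr

/-- Abstract version of the interpolation inequality for mean values (Lemma 7.3 of the paper):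
if `Υ` is a linear operator in `L²(Ω; ℂ^N)` whose commutators with smooth multiplication
operators are dominated by `K|∇φ|` (hypothesis (H5)) and which satisfies the local cancellation
bound (H6), then the mean of `Υu` over a dyadic cube `Q` obeys a weighted interpolation
estimate between the means of `|u|²` and `|Υu|²` over `Q`. -/
theorem mean_value_interpolation_estimate
    (d N : ℕ) (hd : 1 ≤ d) (hN : 1 ≤ N)
    (Ω : Set (EuclideanSpace ℝ (Fin d))) (hΩopen : IsOpen Ω)
    (μ : Measure (EuclideanSpace ℝ (Fin d))) (hμ : μ = volume.restrict Ω)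
    (K : ℝ) (hK : 0 < K)
    (D : Submodule ℂ (Lp (EuclideanSpace ℂ (Fin N)) 2 μ))
    (T : D →ₗ[ℂ] Lp (EuclideanSpace ℂ (Fin N)) 2 μ)
    -- (i) = (H5): commutators with smooth functions are multiplication operators
    -- dominated by `K |∇φ| |u|`
    (hi : ∀ φ : EuclideanSpace ℝ (Fin d) → ℂ, ContDiff ℝ (⊤ : ℕ∞) φ → HasCompactSupport φ →
      ∀ u : D, ∀ w : Lp (EuclideanSpace ℂ (Fin N)) 2 μ,
        (⇑w =ᵐ[μ] fun x => φ x • (↑u : Lp (EuclideanSpace ℂ (Fin N)) 2 μ) x) →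
        ∃ hw : w ∈ D, ∀ᵐ x ∂μ,
          ‖(T ⟨w, hw⟩) x - φ x • (T u) x‖ ≤
            K * ‖fderiv ℝ φ x‖ * ‖(↑u : Lp (EuclideanSpace ℂ (Fin N)) 2 μ) x‖)
    -- (ii) = (H6): local cancellation estimate on balls centered in `Ω`
    (hii : ∀ z ∈ Ω, ∀ ρ : ℝ, 0 < ρ → ∀ u : D, ∀ S : Set (EuclideanSpace ℝ (Fin d)),
        IsCompact S → S ⊆ ball z ρ ∩ Ω →
        (∀ᵐ x ∂μ, x ∉ S → (↑u : Lp (EuclideanSpace ℂ (Fin N)) 2 μ) x = 0) →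
        ‖∫ x, (T u) x ∂μ‖ ≤
          K * (volume (ball z ρ)).toReal ^ ((1 : ℝ) / 2) *
            ‖(↑u : Lp (EuclideanSpace ℂ (Fin N)) 2 μ)‖)
    (η C₁ C₂ c : ℝ) (hη0 : 0 < η) (hη1 : η ≤ 1) (hC₁ : 0 < C₁) (hC₂ : 0 < C₂) (hc : 0 < c) :
    ∃ C > 0, ∀ t : ℝ, 0 < t → t ≤ 1 →
      ∀ Q : Set (EuclideanSpace ℝ (Fin d)), MeasurableSet Q → Q ⊆ Ω →
      ENNReal.ofReal (c * t ^ d) ≤ volume Q →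
      (∃ z ∈ Ω, Q ⊆ ball z (C₁ * t)) →
      (∀ r : ℝ, 0 < r →
        volume {x ∈ Q | EMetric.infEdist x Qᶜ ≤ ENNReal.ofReal r} ≤
          ENNReal.ofReal (C₂ * (r / t) ^ η) * volume Q) →
      ∀ u : D,
        ‖⨍ x in Q, (T u) x ∂μ‖ ^ 2 ≤
          C * (t ^ (-η) *
              (⨍ x in Q, ‖(↑u : Lp (EuclideanSpace ℂ (Fin N)) 2 μ) x‖ ^ 2 ∂μ) ^ (η / 2) *
              (⨍ x in Q, ‖(T u) x‖ ^ 2 ∂μ) ^ (1 - η / 2) +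
            ⨍ x in Q, ‖(↑u : Lp (EuclideanSpace ℂ (Fin N)) 2 μ) x‖ ^ 2 ∂μ) := by

  have hdim : Nonempty (Fin d) := ⟨⟨0, hd⟩⟩
  set B₁ : ℝ := (volume (ball (0 : EuclideanSpace ℝ (Fin d)) 1)).toReal with hB₁
  have hB₁pos : 0 < B₁ :=
    ENNReal.toReal_pos (measure_ball_pos _ _ one_pos).ne' measure_ball_lt_top.ne
  set a : ℝ := K * √(B₁ * C₁ ^ d / c) with ha
  have hapos : 0 < a := by positivity
  refine ⟨2 * a ^ 2 + 2 * (√C₂ * (K * 4 + 1)) ^ 2, by positivity, ?_⟩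
  rintro t ht - Q hQ hQΩ hQvol ⟨z, hz, hQz⟩ hstrip u
  have hvolQ : volume Q ≠ ∞ := measure_ne_top_of_subset hQz measure_ball_lt_top.ne
  have hμeq : ∀ A ⊆ Q, μ A = volume A := fun A hA => by
    rw [hμ, Measure.restrict_eq_self _ (hA.trans hQΩ)]
  have hμQ : μ Q ≠ ∞ := by rwa [hμeq Q subset_rfl]
  set V : ℝ := μ.real Q with hV
  have hVvol : V = (volume Q).toReal := by rw [hV, measureReal_def, hμeq Q subset_rfl]
  have hcV : c * t ^ d ≤ V := by
    rw [hVvol]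
    exact (ENNReal.ofReal_le_iff_le_toReal hvolQ).1 hQvol
  have hVpos : 0 < V := lt_of_lt_of_le (by positivity) hcV
  have hQc : (Qᶜ).Nonempty := by
    rw [nonempty_compl]
    rintro rfl
    exact hvolQ (measure_univ_of_isAddLeftInvariant _)
  set X : ℝ := √(⨍ x in Q, ‖(↑u : Lp (EuclideanSpace ℂ (Fin N)) 2 μ) x‖ ^ 2 ∂μ) with hX
  set Y : ℝ := √(⨍ x in Q, ‖(T u) x‖ ^ 2 ∂μ) with hY
  have hXsq : ⨍ x in Q, ‖(↑u : Lp (EuclideanSpace ℂ (Fin N)) 2 μ) x‖ ^ 2 ∂μ = X ^ 2 :=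
    (Real.sq_sqrt (integral_nonneg fun x => by positivity)).symm
  have hYsq : ⨍ x in Q, ‖(T u) x‖ ^ 2 ∂μ = Y ^ 2 :=
    (Real.sq_sqrt (integral_nonneg fun x => by positivity)).symm
  have havg : ∀ f : EuclideanSpace ℝ (Fin d) → ℝ,
      √(∫ x in Q, f x ∂μ) = √V * √(⨍ x in Q, f x ∂μ) := fun f => by
    rw [← Real.sqrt_mul hVpos.le, setAverage_eq, smul_eq_mul, mul_inv_cancel_left₀ hVpos.ne']
  rw [hXsq, hYsq]
  refine sq_le_of_forall_splitting (norm_nonneg _) (Real.sqrt_nonneg _) (Real.sqrt_nonneg _)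
    ht hη0 hη1 hapos.le (Real.sqrt_nonneg _) (by positivity) fun ε hε => ?_
  obtain ⟨r, hr⟩ : ∃ r, r = ε * t := ⟨_, rfl⟩
  have hrpos : 0 < r := hr ▸ mul_pos hε ht
  obtain ⟨φ, hφs, hφ0, hφ1, hφone, hφzero, hφL⟩ := exists_contDiff_cutoff Qᶜ hrpos
  set ψ : EuclideanSpace ℝ (Fin d) → ℂ := fun x => (φ x : ℂ) with hψ
  have hψs : ContDiff ℝ (⊤ : ℕ∞) ψ := Complex.ofRealCLM.contDiff.comp hφs
  have hψnorm : ∀ x, ‖ψ x‖ = φ x := fun x => by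
    simp only [hψ, Complex.norm_real]
    exact Real.norm_of_nonneg (hφ0 x)
  have hψfderiv : ∀ x, ‖fderiv ℝ ψ x‖ ≤ 4 / r := by
    intro x
    have hL : LipschitzWith (Real.toNNReal (4 / r)) ψ := LipschitzWith.of_dist_le' fun x y => by
      rw [dist_eq_norm, ← Complex.ofReal_sub, Complex.norm_real]
      exact hφL x y
    simpa [Real.coe_toNNReal _ (by positivity : 0 ≤ 4 / r)] using
      norm_fderiv_le_of_lipschitz ℝ hL (x₀ := x)
  set A : Set (EuclideanSpace ℝ (Fin d)) := {x | r / 4 ≤ infDist x Qᶜ} with hA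
  have hAQ : A ⊆ Q := by
    intro x hx
    by_contra hxQ
    have h0 : infDist x Qᶜ = 0 := infDist_zero_of_mem hxQ
    have : r / 4 ≤ infDist x Qᶜ := hx
    linarith
  have hAcompact : IsCompact A :=
    isCompact_of_isClosed_isBounded (isClosed_le continuous_const (continuous_infDist_pt _))
      (isBounded_ball.subset (hAQ.trans hQz))
  have hψA : ∀ x, x ∉ A → ψ x = 0 := fun x hx => by
    simp only [hψ, hφzero x (not_le.1 hx).le, Complex.ofReal_zero]
  have hψc : HasCompactSupport ψ := HasCompactSupport.intro hAcompact hψA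
  have hψfderiv_off : ∀ x, x ∉ A → fderiv ℝ ψ x = 0 := by
    intro x hx
    have : ψ =ᶠ[nhds x] fun _ => 0 :=
      Filter.eventually_of_mem (hAcompact.isClosed.isOpen_compl.mem_nhds hx) hψA
    rw [this.fderiv_eq]
    simp
  have hψfderiv_one : ∀ x, r < infDist x Qᶜ → fderiv ℝ ψ x = 0 := by
    intro x hx
    have : ψ =ᶠ[nhds x] fun _ => 1 := by
      filter_upwards [(isOpen_lt continuous_const (continuous_infDist_pt Qᶜ)).mem_nhds hx]
        with y hy
      simp only [hψ, hφone y hy, Complex.ofReal_one]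
    rw [this.fderiv_eq]
    simp
  have hwmem : MemLp (fun x => ψ x • (↑u : Lp (EuclideanSpace ℂ (Fin N)) 2 μ) x) 2 μ := by
    refine (Lp.memLp (↑u : Lp (EuclideanSpace ℂ (Fin N)) 2 μ)).of_le
      (hψs.continuous.aestronglyMeasurable.smul (Lp.aestronglyMeasurable _))
      (Filter.Eventually.of_forall fun x => ?_)
    rw [norm_smul, hψnorm]
    exact mul_le_of_le_one_left (norm_nonneg _) (hφ1 x)
  obtain ⟨w, hwdef⟩ : ∃ w, w = hwmem.toLp _ := ⟨_, rfl⟩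
  have hwcoe : ⇑w =ᵐ[μ] fun x => ψ x • (↑u : Lp (EuclideanSpace ℂ (Fin N)) 2 μ) x :=
    hwdef ▸ hwmem.coeFn_toLp
  obtain ⟨hwD, hcomm⟩ := hi ψ hψs hψc u w hwcoe
  have hwA : ∀ᵐ x ∂μ, x ∉ A → w x = 0 := by
    filter_upwards [hwcoe] with x hx hxA
    rw [hx, hψA x hxA, zero_smul]
  have hwle : ∀ᵐ x ∂μ, ‖w x‖ ≤ ‖(↑u : Lp (EuclideanSpace ℂ (Fin N)) 2 μ) x‖ := by
    filter_upwards [hwcoe] with x hx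
    rw [hx, norm_smul, hψnorm]
    exact mul_le_of_le_one_left (norm_nonneg _) (hφ1 x)
  have hwnorm : ‖w‖ ≤ √V * X := by
    rw [hX, ← havg]
    refine norm_Lp_two_le_sqrt_setIntegral w _ hwle ?_
    filter_upwards [hwA] with x hx hxQ using hx fun h => hxQ (hAQ h)
  have hcancel : ‖∫ x, (T ⟨w, hwD⟩) x ∂μ‖ ≤ V * (a * X) := by
    have h1 := hii z hz (C₁ * t) (by positivity) ⟨w, hwD⟩ A hAcompact
      (subset_inter (hAQ.trans hQz) (hAQ.trans hQΩ)) hwA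
    have hball : (volume (ball z (C₁ * t))).toReal ≤ B₁ * C₁ ^ d / c * V := by
      rw [Measure.addHaar_ball_of_pos _ _ (by positivity), ENNReal.toReal_mul,
        ENNReal.toReal_ofReal (by positivity), finrank_euclideanSpace_fin, ← hB₁]
      calc (C₁ * t) ^ d * B₁ = B₁ * C₁ ^ d / c * (c * t ^ d) := by rw [mul_pow]; field_simp
        _ ≤ _ := by gcongr
    calc _ ≤ _ := h1
      _ ≤ K * √(B₁ * C₁ ^ d / c * V) * (√V * X) := by
          rw [← Real.sqrt_eq_rpow]
          gcongr
      _ = (√V * √V) * (a * X) := by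
          rw [Real.sqrt_mul (by positivity), ha]
          ring
      _ = V * (a * X) := by rw [Real.mul_self_sqrt hVpos.le]
  set S : Set (EuclideanSpace ℝ (Fin d)) := {x ∈ Q | infDist x Qᶜ ≤ r} with hSdef
  have hSQ : S ⊆ Q := fun x hx => hx.1
  have hSvol : μ.real S ≤ C₂ * ε ^ η * V := by
    have h1 : S ⊆ {x ∈ Q | infEDist x Qᶜ ≤ ENNReal.ofReal r} := fun x hx =>
      ⟨hx.1, (ENNReal.le_ofReal_iff_toReal_le (infEDist_ne_top hQc) hrpos.le).2 hx.2⟩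
    have h2 := (measure_mono h1).trans (hstrip r hrpos)
    rw [measureReal_def, hμeq S hSQ, hVvol]
    refine (ENNReal.toReal_mono (ENNReal.mul_ne_top ENNReal.ofReal_ne_top hvolQ) h2).trans_eq ?_
    rw [ENNReal.toReal_mul, ENNReal.toReal_ofReal (by positivity), hr,
      mul_div_cancel_right₀ _ ht.ne']
  have hsqrtS : √(μ.real S) ≤ √C₂ * ε ^ (η / 2) * √V := by
    calc √(μ.real S) ≤ √(C₂ * ε ^ η * V) := Real.sqrt_le_sqrt hSvol
      _ = _ := by
        rw [Real.sqrt_mul (by positivity), Real.sqrt_mul hC₂.le, Real.sqrt_eq_rpow (ε ^ η),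
          ← Real.rpow_mul hε.le, mul_one_div]
  have hmain := norm_setIntegral_le_of_localisation (M := K * (4 / r)) (by positivity)
    (Lp.memLp (T u)) (Lp.memLp (T ⟨w, hwD⟩)) (Lp.memLp (↑u : Lp (EuclideanSpace ℂ (Fin N)) 2 μ))
    hQ hSQ hμQ
    (by
      filter_upwards [hcomm] with x hx hxQ
      have hxA : x ∉ A := fun h => hxQ (hAQ h)
      simpa [hψA x hxA, hψfderiv_off x hxA] using hx)
    (by
      filter_upwards [hcomm] with x hx hxQ hxS
      have hxr : r < infDist x Qᶜ := not_le.1 fun h => hxS ⟨hxQ, h⟩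
      have hone : ψ x = 1 := by simp only [hψ, hφone x hxr, Complex.ofReal_one]
      rw [hψfderiv_one x hxr, hone, one_smul, norm_zero, mul_zero, zero_mul, norm_le_zero_iff,
        sub_eq_zero] at hx
      exact hx.symm)
    (by
      filter_upwards [hcomm] with x hx
      have h1 : ‖(T u) x - ψ x • (T u) x‖ ≤ ‖(T u) x‖ := by
        have : (T u) x - ψ x • (T u) x = ((1 - φ x : ℝ) : ℂ) • (T u) x := by
          simp only [hψ, Complex.ofReal_sub, Complex.ofReal_one, sub_smul, one_smul]
        rw [this, norm_smul, Complex.norm_real, Real.norm_of_nonneg (by linarith [hφ1 x])]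
        exact mul_le_of_le_one_left (norm_nonneg _) (by linarith [hφ0 x])
      have h2 : K * ‖fderiv ℝ ψ x‖ * ‖(↑u : Lp (EuclideanSpace ℂ (Fin N)) 2 μ) x‖ ≤
          K * (4 / r) * ‖(↑u : Lp (EuclideanSpace ℂ (Fin N)) 2 μ) x‖ := by
        gcongr
        exact hψfderiv x
      have h3 := norm_sub_le_norm_sub_add_norm_sub ((T u) x) (ψ x • (T u) x) ((T ⟨w, hwD⟩) x)
      rw [norm_sub_rev (ψ x • (T u) x)] at h3
      linarith)
  rw [havg, havg, ← hX, ← hY] at hmain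
  rw [setAverage_eq, norm_smul, Real.norm_of_nonneg (inv_nonneg.2 measureReal_nonneg), ← hV,
    inv_mul_le_iff₀ hVpos]
  calc _ ≤ _ := hmain
    _ ≤ V * (a * X) + √C₂ * ε ^ (η / 2) * √V * (K * (4 / r) * (√V * X) + √V * Y) := by gcongr
    _ = V * (a * X) + (√V * √V) * (√C₂ * ε ^ (η / 2) * (K * 4 * X / r + Y)) := by ring
    _ = _ := by rw [Real.mul_self_sqrt hVpos.le, hr]; ring
end

section
/- Let H be a complex Hilbert space and let B be a densely defined self-adjoint operator in H (i.e. B coincides with its adjoint). Suppose (P_t)_{t>0} is a family of bounded linear operators on H such that for all t > 0 and all u ∈ H one has P_t u ∈ D(B), B(P_t u) ∈ D(B), and P_t u + t² B(B(P_t u)) = u (so P_t = (1 + t²B²)^{−1}). Then for every u in the closure of the range of B, ∫₀^∞ ‖t B(P_t u)‖² dt/t = ½ ‖u‖². -/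
open MeasureTheory Set
open scoped ENNReal

section Real

open Filter Topology InnerProductSpace

variable {E : Type*} [NormedAddCommGroup E] [InnerProductSpace ℝ E] {u : E} {x g : ℝ → E}

theorem norm_le_of_resolvent_identity
    (hres : ∀ t, 0 < t → ∀ s, 0 < s → t ^ 2 * ⟪g t, g s⟫_ℝ = ⟪u - x t, x s⟫_ℝ)
    {t : ℝ} (ht : 0 < t) : ‖x t‖ ≤ ‖u‖ := by
  have h := hres t ht t ht
  rw [inner_sub_left, real_inner_self_eq_norm_sq, real_inner_self_eq_norm_sq] at h
  have h1 := real_inner_le_norm u (x t)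
  have h2 : 0 ≤ t ^ 2 * ‖g t‖ ^ 2 := by positivity
  nlinarith [norm_nonneg u, norm_nonneg (x t)]

theorem norm_sub_le_of_resolvent_identity
    (hres : ∀ t, 0 < t → ∀ s, 0 < s → t ^ 2 * ⟪g t, g s⟫_ℝ = ⟪u - x t, x s⟫_ℝ)
    {t : ℝ} (ht : 0 < t) : ‖u - x t‖ ≤ ‖u‖ := by
  have h := hres t ht t ht
  rw [inner_sub_left, real_inner_self_eq_norm_sq, real_inner_self_eq_norm_sq] at h
  have h2 : 0 ≤ t ^ 2 * ‖g t‖ ^ 2 := by positivity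
  have h3 := norm_sub_sq_real u (x t)
  refine le_of_sq_le_sq ?_ (norm_nonneg u)
  nlinarith [sq_nonneg ‖x t‖]

theorem mul_norm_le_of_resolvent_identity
    (hres : ∀ t, 0 < t → ∀ s, 0 < s → t ^ 2 * ⟪g t, g s⟫_ℝ = ⟪u - x t, x s⟫_ℝ)
    {t : ℝ} (ht : 0 < t) : t * ‖g t‖ ≤ ‖u‖ := by
  have h := hres t ht t ht
  have h1 := real_inner_le_norm (u - x t) (x t)
  have h2 := mul_le_mul (norm_sub_le_of_resolvent_identity hres ht)
    (norm_le_of_resolvent_identity hres ht) (norm_nonneg _) (norm_nonneg _)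
  rw [real_inner_self_eq_norm_sq] at h
  exact le_of_sq_le_sq (by nlinarith) (norm_nonneg u)

theorem continuousAt_of_resolvent_identity
    (hres : ∀ t, 0 < t → ∀ s, 0 < s → t ^ 2 * ⟪g t, g s⟫_ℝ = ⟪u - x t, x s⟫_ℝ)
    {t : ℝ} (ht : 0 < t) : ContinuousAt g t := by
  have hbound : ∀ s, 0 < s →
      ‖g s - g t‖ ^ 2 ≤ |s ^ 2 - t ^ 2| / (s ^ 2 * t ^ 2) * (2 * ‖u‖ ^ 2) := by
    intro s hs
    have htt := hres t ht t ht
    have hts := hres t ht s hs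
    have hst := hres s hs t ht
    have hss := hres s hs s hs
    rw [real_inner_comm] at hst
    have h1 : s ^ 2 * (‖x t - x s‖ ^ 2 + t ^ 2 * ‖g s - g t‖ ^ 2) =
        (s ^ 2 - t ^ 2) * ⟪u - x s, x t - x s⟫_ℝ := by
      rw [norm_sub_sq_real, norm_sub_sq_real, ← real_inner_self_eq_norm_sq,
        ← real_inner_self_eq_norm_sq, ← real_inner_self_eq_norm_sq, ← real_inner_self_eq_norm_sq,
        real_inner_comm (g t) (g s)]
      simp only [inner_sub_left, inner_sub_right] at *
      rw [real_inner_comm (x t) (x s)] at hst ⊢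
      linear_combination s ^ 2 * htt - s ^ 2 * hts + t ^ 2 * hss - t ^ 2 * hst
    have h2 : |⟪u - x s, x t - x s⟫_ℝ| ≤ 2 * ‖u‖ ^ 2 := by
      refine (abs_real_inner_le_norm _ _).trans ?_
      have h3 := norm_sub_le_of_resolvent_identity hres hs
      have h4 : ‖x t - x s‖ ≤ 2 * ‖u‖ := by
        linarith [norm_sub_le (x t) (x s), norm_le_of_resolvent_identity hres hs,
          norm_le_of_resolvent_identity hres ht]
      nlinarith [mul_le_mul h3 h4 (norm_nonneg _) (norm_nonneg _)]
    have h5 : (s ^ 2 - t ^ 2) * ⟪u - x s, x t - x s⟫_ℝ ≤ |s ^ 2 - t ^ 2| * (2 * ‖u‖ ^ 2) := by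
      refine (le_abs_self _).trans ?_
      rw [abs_mul]
      gcongr
    rw [div_mul_eq_mul_div, le_div_iff₀ (by positivity)]
    nlinarith [mul_nonneg (sq_nonneg s) (sq_nonneg ‖x t - x s‖)]
  rw [ContinuousAt, tendsto_iff_norm_sub_tendsto_zero]
  have hlim : Tendsto (fun s : ℝ => |s ^ 2 - t ^ 2| / (s ^ 2 * t ^ 2) * (2 * ‖u‖ ^ 2))
      (𝓝 t) (𝓝 0) := by
    have hc : ContinuousAt (fun s : ℝ => |s ^ 2 - t ^ 2| / (s ^ 2 * t ^ 2) * (2 * ‖u‖ ^ 2)) t :=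
      ContinuousAt.mul (ContinuousAt.div (by fun_prop) (by fun_prop) (by positivity))
        continuousAt_const
    simpa [ContinuousAt] using hc
  have hsq : Tendsto (fun s => ‖g s - g t‖ ^ 2) (𝓝 t) (𝓝 0) :=
    squeeze_zero' (Eventually.of_forall fun s => by positivity)
      ((eventually_gt_nhds ht).mono hbound) hlim
  simpa using hsq.sqrt

theorem hasDerivAt_inner_of_resolvent_identity
    (hres : ∀ t, 0 < t → ∀ s, 0 < s → t ^ 2 * ⟪g t, g s⟫_ℝ = ⟪u - x t, x s⟫_ℝ)
    {t : ℝ} (ht : 0 < t) :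
    HasDerivAt (fun s => ⟪u, x s⟫_ℝ) (-(2 * t * ‖g t‖ ^ 2)) t := by
  rw [hasDerivAt_iff_tendsto_slope]
  have hlim : Tendsto (fun s => -((s + t) * ⟪g t, g s⟫_ℝ)) (𝓝[≠] t)
      (𝓝 (-(2 * t * ‖g t‖ ^ 2))) := by
    have hg : ContinuousAt g t := continuousAt_of_resolvent_identity hres ht
    have hc : ContinuousAt (fun s => -((s + t) * ⟪g t, g s⟫_ℝ)) t := by fun_prop
    have hc' := hc.tendsto
    rw [real_inner_self_eq_norm_sq, ← two_mul] at hc'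
    exact hc'.mono_left nhdsWithin_le_nhds
  refine hlim.congr' ?_
  filter_upwards [self_mem_nhdsWithin, nhdsWithin_le_nhds (eventually_gt_nhds ht)] with s hne hs
  have hts := hres t ht s hs
  have hst := hres s hs t ht
  rw [real_inner_comm] at hst
  simp only [inner_sub_left] at hts hst
  rw [real_inner_comm (x t) (x s)] at hst
  have hne' : s - t ≠ 0 := sub_ne_zero.2 hne
  rw [slope_def_field, eq_div_iff hne']
  linear_combination hts - hst

theorem tendsto_inner_zero_of_resolvent_identity
    (hres : ∀ t, 0 < t → ∀ s, 0 < s → t ^ 2 * ⟪g t, g s⟫_ℝ = ⟪u - x t, x s⟫_ℝ)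
    {D : Set E} (hu : u ∈ closure D)
    (hD : ∀ v ∈ D, ∃ w, ∀ t, 0 < t → t ^ 2 * ⟪g t, w⟫_ℝ = ⟪u - x t, v⟫_ℝ) :
    Tendsto (fun t => ⟪u, x t⟫_ℝ) (𝓝[>] 0) (𝓝 (‖u‖ ^ 2)) := by
  rw [Metric.tendsto_nhds]
  intro ε hε
  obtain ⟨v, hv, huv⟩ := Metric.mem_closure_iff.1 hu (ε / (2 * (‖u‖ + 1))) (by positivity)
  obtain ⟨w, hw⟩ := hD v hv
  have hδ : 0 < ε / (2 * (‖u‖ * ‖w‖ + 1)) := by positivity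
  filter_upwards [Ioo_mem_nhdsGT hδ] with t ⟨ht, htδ⟩
  rw [dist_eq_norm, lt_div_iff₀ (by positivity)] at huv
  rw [lt_div_iff₀ (by positivity)] at htδ
  have h1 : ⟪u, x t⟫_ℝ - ‖u‖ ^ 2 = -(⟪u - x t, u - v⟫_ℝ + t ^ 2 * ⟪g t, w⟫_ℝ) := by
    rw [hw t ht, ← inner_add_right, sub_add_cancel, inner_sub_left, real_inner_self_eq_norm_sq,
      real_inner_comm]
    ring
  have h2 : |⟪u - x t, u - v⟫_ℝ| ≤ ‖u‖ * ‖u - v‖ :=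
    (abs_real_inner_le_norm _ _).trans
      (mul_le_mul_of_nonneg_right (norm_sub_le_of_resolvent_identity hres ht) (norm_nonneg _))
  have h3 : |t ^ 2 * ⟪g t, w⟫_ℝ| ≤ t * (‖u‖ * ‖w‖) := by
    rw [abs_mul, abs_of_nonneg (sq_nonneg t)]
    calc t ^ 2 * |⟪g t, w⟫_ℝ| ≤ t ^ 2 * (‖g t‖ * ‖w‖) := by
          gcongr; exact abs_real_inner_le_norm _ _
      _ = t * (t * ‖g t‖ * ‖w‖) := by ring
      _ ≤ t * (‖u‖ * ‖w‖) := by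
          gcongr; exact mul_norm_le_of_resolvent_identity hres ht
  rw [Real.dist_eq, h1, abs_neg]
  refine (abs_add_le _ _).trans_lt ?_
  nlinarith [norm_nonneg (u - v)]

theorem tendsto_inner_atTop_of_resolvent_identity
    (hres : ∀ t, 0 < t → ∀ s, 0 < s → t ^ 2 * ⟪g t, g s⟫_ℝ = ⟪u - x t, x s⟫_ℝ)
    {R : Set E} (hu : u ∈ closure R)
    (hR : ∀ r ∈ R, ∃ v, ∀ t, 0 < t → ⟪g t, v⟫_ℝ = ⟪x t, r⟫_ℝ) :
    Tendsto (fun t => ⟪u, x t⟫_ℝ) atTop (𝓝 0) := by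
  rw [Metric.tendsto_nhds]
  intro ε hε
  obtain ⟨r, hr, hur⟩ := Metric.mem_closure_iff.1 hu (ε / (2 * (‖u‖ + 1))) (by positivity)
  obtain ⟨v, hv⟩ := hR r hr
  filter_upwards [eventually_gt_atTop 0, eventually_gt_atTop (2 * (‖u‖ * ‖v‖) / ε)] with t ht htv
  rw [dist_eq_norm, lt_div_iff₀ (by positivity)] at hur
  rw [div_lt_iff₀ hε] at htv
  have h1 : ⟪u, x t⟫_ℝ = ⟪x t, u - r⟫_ℝ + ⟪g t, v⟫_ℝ := by
    rw [hv t ht, ← inner_add_right, sub_add_cancel, real_inner_comm]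
  have h2 : |⟪x t, u - r⟫_ℝ| ≤ ‖u‖ * ‖u - r‖ :=
    (abs_real_inner_le_norm _ _).trans
      (mul_le_mul_of_nonneg_right (norm_le_of_resolvent_identity hres ht) (norm_nonneg _))
  have h3 : |⟪g t, v⟫_ℝ| < ε / 2 := by
    have h4 : t * |⟪g t, v⟫_ℝ| ≤ ‖u‖ * ‖v‖ := by
      calc t * |⟪g t, v⟫_ℝ| ≤ t * (‖g t‖ * ‖v‖) := by
            gcongr; exact abs_real_inner_le_norm _ _
        _ = t * ‖g t‖ * ‖v‖ := by ring
        _ ≤ ‖u‖ * ‖v‖ := by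
            gcongr; exact mul_norm_le_of_resolvent_identity hres ht
    refine lt_of_mul_lt_mul_left (a := t) ?_ ht.le
    linarith
  rw [Real.dist_eq, sub_zero, h1]
  refine (abs_add_le _ _).trans_lt ?_
  nlinarith [norm_nonneg (u - r)]

theorem lintegral_eq_of_resolvent_identity
    (hres : ∀ t, 0 < t → ∀ s, 0 < s → t ^ 2 * ⟪g t, g s⟫_ℝ = ⟪u - x t, x s⟫_ℝ)
    (h_zero : Tendsto (fun t => ⟪u, x t⟫_ℝ) (𝓝[>] 0) (𝓝 (‖u‖ ^ 2)))
    (h_top : Tendsto (fun t => ⟪u, x t⟫_ℝ) atTop (𝓝 0)) :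
    ∫⁻ t in Ioi (0 : ℝ), ENNReal.ofReal (t * ‖g t‖ ^ 2) = ENNReal.ofReal (‖u‖ ^ 2 / 2) := by
  set F : ℝ → ℝ := Function.update (fun t => -(⟪u, x t⟫_ℝ / 2)) 0 (-(‖u‖ ^ 2 / 2)) with hF
  have hF_eq : ∀ t, 0 < t → F t = -(⟪u, x t⟫_ℝ / 2) := fun t ht =>
    Function.update_of_ne ht.ne' _ _
  have hF_cont : ContinuousWithinAt F (Ici 0) 0 := by
    rw [hF, continuousWithinAt_update_same, Ici_sdiff_left]
    exact (h_zero.div_const 2).neg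
  have hF_deriv : ∀ t ∈ Ioi (0 : ℝ), HasDerivAt F (t * ‖g t‖ ^ 2) t := by
    intro t ht
    have h := ((hasDerivAt_inner_of_resolvent_identity hres ht).div_const 2).fun_neg
    refine (h.congr_of_eventuallyEq ((eventually_gt_nhds ht).mono hF_eq)).congr_deriv ?_
    ring
  have hF_top : Tendsto F atTop (𝓝 0) := by
    have h := (h_top.div_const 2).neg
    rw [zero_div, neg_zero] at h
    exact h.congr' ((eventually_gt_atTop 0).mono fun t ht => (hF_eq t ht).symm)
  have h_nonneg : ∀ t ∈ Ioi (0 : ℝ), 0 ≤ t * ‖g t‖ ^ 2 := fun t ht =>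
    mul_nonneg (le_of_lt ht) (sq_nonneg _)
  rw [← ofReal_integral_eq_lintegral_ofReal
    (integrableOn_Ioi_deriv_of_nonneg hF_cont hF_deriv h_nonneg hF_top)
    ((ae_restrict_iff' measurableSet_Ioi).2 (ae_of_all _ h_nonneg)),
    integral_Ioi_of_hasDerivAt_of_nonneg hF_cont hF_deriv h_nonneg hF_top]
  simp [hF]

end Real

/-- **Resolution of the identity** for a densely defined self-adjoint operator `B` on a complex
Hilbert space: for `u` in the closure of the range of `B`,
`∫₀^∞ ‖t B (1 + t²B²)^{-1} u‖² dt/t = ½ ‖u‖²`. Here `g` denotes the function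
`t ↦ B((1 + t²B²)^{-1}u) = B(P_t u)`, which is uniquely determined on `(0, ∞)` by the stated
hypothesis. -/
theorem resolution_of_identity_selfadjoint
    (H : Type*) [NormedAddCommGroup H] [InnerProductSpace ℂ H] [CompleteSpace H]
    (B : H →ₗ.[ℂ] H)
    (hdense : Dense (B.domain : Set H))
    (hsa : IsSelfAdjoint B)
    (P : ℝ → H →L[ℂ] H)
    (hP : ∀ t : ℝ, 0 < t → ∀ u : H, ∃ h₁ : P t u ∈ B.domain,
      ∃ h₂ : B ⟨P t u, h₁⟩ ∈ B.domain,
        P t u + ((t : ℂ) ^ 2) • B ⟨B ⟨P t u, h₁⟩, h₂⟩ = u)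
    (u : H) (hu : u ∈ closure (Set.range fun v : B.domain => B v))
    (g : ℝ → H)
    (hg : ∀ t : ℝ, 0 < t → ∃ h : P t u ∈ B.domain, g t = B ⟨P t u, h⟩) :
    ∫⁻ t in Set.Ioi (0 : ℝ), ENNReal.ofReal (‖t • g t‖ ^ 2 / t) =
      ENNReal.ofReal (‖u‖ ^ 2 / 2) := by
  have hsymm : ∀ v w : B.domain, inner ℂ (B v) (w : H) = inner ℂ (v : H) (B w) := by
    have h := LinearPMap.adjoint_isFormalAdjoint hdense
    rwa [LinearPMap.isSelfAdjoint_def.1 hsa] at h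
  let _ : InnerProductSpace ℝ H := InnerProductSpace.rclikeToReal ℂ H
  have hrange : ∀ t, 0 < t → ∀ v : B.domain, inner ℝ (g t) (v : H) = inner ℝ (P t u) (B v) := by
    intro t ht v
    obtain ⟨h, hgt⟩ := hg t ht
    rw [hgt, real_inner_eq_re_inner ℂ, real_inner_eq_re_inner ℂ, hsymm]
  have hdom : ∀ t, 0 < t → ∀ v : B.domain,
      t ^ 2 * inner ℝ (g t) (B v) = inner ℝ (u - P t u) (v : H) := by
    intro t ht v
    obtain ⟨h, hgt⟩ := hg t ht
    obtain ⟨h₁, h₂, heq⟩ := hP t ht u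
    have hsub : u - P t u = ((t : ℂ) ^ 2) • B ⟨B ⟨P t u, h₁⟩, h₂⟩ := sub_eq_of_eq_add' heq.symm
    rw [hsub, hgt, real_inner_eq_re_inner ℂ, real_inner_eq_re_inner ℂ, inner_smul_left, hsymm,
      ← Complex.ofReal_pow, Complex.conj_ofReal]
    exact (Complex.re_ofReal_mul _ _).symm
  have hres : ∀ t, 0 < t → ∀ s, 0 < s →
      t ^ 2 * inner ℝ (g t) (g s) = inner ℝ (u - P t u) (P s u) := by
    intro t ht s hs
    obtain ⟨h, hgs⟩ := hg s hs
    rw [hgs, hdom t ht ⟨P s u, h⟩]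
  have h_zero := tendsto_inner_zero_of_resolvent_identity hres (hdense u)
    fun v hv => ⟨B ⟨v, hv⟩, fun t ht => hdom t ht ⟨v, hv⟩⟩
  have h_top := tendsto_inner_atTop_of_resolvent_identity hres hu (by
    rintro _ ⟨v, rfl⟩
    exact ⟨v, fun t ht => hrange t ht v⟩)
  rw [← lintegral_eq_of_resolvent_identity hres h_zero h_top]
  refine setLIntegral_congr_fun measurableSet_Ioi fun t ht => ?_
  have ht' : t ≠ 0 := ne_of_gt ht
  congr 1
  rw [norm_smul, mul_pow, Real.norm_eq_abs, sq_abs]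
  field_simp
end

section
/- Let H be a complex Hilbert space and let B be a densely defined self-adjoint operator in H. Suppose (P_t)_{t>0} is a family of bounded linear operators on H such that for all t > 0 and all u ∈ H one has P_t u ∈ D(B), B(P_t u) ∈ D(B), and P_t u + t² B(B(P_t u)) = u. Let (T_t)_{t>0} be a family of bounded linear operators on H such that t ↦ T_t u is measurable for each u ∈ H, and let ζ : (0,∞) → [0,∞) be measurable with Z := ∫₀^∞ ζ(r) dr/r < ∞ and such that ‖T_t(s B(P_s u))‖ ≤ ζ(t/s) ‖u‖ for all s, t > 0 and all u ∈ H. Then ∫₀^∞ ‖T_t u‖² dt/t ≤ 2 Z² ‖u‖² for every u in the closure of the range of B. -/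
open MeasureTheory Set
open scoped ENNReal
open Filter Topology

/-- `P s = (1 + s²B²)⁻¹` and `g s = B (1 + s²B²)⁻¹` for `s > 0`, expressed through the graph of a
symmetric operator `B`. -/
structure IsSquareResolvent {H : Type*} [NormedAddCommGroup H] [InnerProductSpace ℂ H]
    (B : H →ₗ.[ℂ] H) (P : ℝ → H →L[ℂ] H) (g : ℝ → H → H) : Prop where
  symm : ∀ {x y x' y' : H}, (x, y) ∈ B.graph → (x', y') ∈ B.graph → inner ℂ y x' = inner ℂ x y'
  mem : ∀ {s : ℝ}, 0 < s → ∀ u : H, (P s u, g s u) ∈ B.graph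
  mem_sq : ∀ {s : ℝ}, 0 < s → ∀ u : H, (g s u, (s ^ 2)⁻¹ • (u - P s u)) ∈ B.graph

namespace IsSquareResolvent

variable {H : Type*} [NormedAddCommGroup H] [InnerProductSpace ℂ H]
  {B : H →ₗ.[ℂ] H} {P : ℝ → H →L[ℂ] H} {g : ℝ → H → H}

lemma smul_mem_graph {x y : H} (r : ℝ) (h : (x, y) ∈ B.graph) : (r • x, r • y) ∈ B.graph :=
  B.graph.smul_of_tower_mem r h

lemma apply_add_smul (h : IsSquareResolvent B P g) {s : ℝ} (hs : 0 < s) {x y z : H}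
    (hxy : (x, y) ∈ B.graph) (hyz : (y, z) ∈ B.graph) : P s (x + s ^ 2 • z) = x := by
  set u := x + s ^ 2 • z with hu
  have hs2 : s ^ 2 ≠ 0 := by positivity
  have h1 := B.graph.sub_mem (h.mem hs u) hxy
  have h2 := B.graph.sub_mem (h.mem_sq hs u) hyz
  have e : (s ^ 2)⁻¹ • (u - P s u) - z = -((s ^ 2)⁻¹ • (P s u - x)) := by
    have : z = (s ^ 2)⁻¹ • (u - x) := by rw [hu, add_sub_cancel_left, inv_smul_smul₀ hs2]
    rw [this, ← smul_sub, ← smul_neg]; congr 1; abel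
  simp only [Prod.mk_sub_mk] at h1 h2
  rw [e] at h2
  have h3 := congrArg Complex.re (h.symm h1 h2)
  rw [inner_neg_right, inner_smul_right_eq_smul] at h3
  simp only [inner_self_eq_norm_sq_to_K, Complex.neg_re, Complex.smul_re] at h3
  norm_cast at h3
  simp only [Complex.coe_algebraMap, Complex.ofReal_re, smul_eq_mul] at h3
  have h4 : ‖P s u - x‖ ^ 2 = 0 := by
    have : 0 < (s ^ 2)⁻¹ := by positivity
    nlinarith [sq_nonneg ‖g s u - y‖, sq_nonneg ‖P s u - x‖]
  exact sub_eq_zero.mp (norm_eq_zero.mp (pow_eq_zero_iff two_ne_zero |>.mp h4))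

lemma apply_eq (h : IsSquareResolvent B P g) {s : ℝ} (hs : 0 < s) {x y : H}
    (hxy : (x, y) ∈ B.graph) : P s y = g s x := by
  have hs2 : s ^ 2 ≠ 0 := by positivity
  have h1 := smul_mem_graph (s ^ 2)⁻¹ (B.graph.sub_mem hxy (h.mem hs x))
  have h2 := h.apply_add_smul hs (h.mem_sq hs x) h1
  rwa [smul_inv_smul₀ hs2, add_sub_cancel] at h2

lemma smul_smul_eq (h : IsSquareResolvent B P g) {s : ℝ} (hs : 0 < s) (u : H) :
    s • g s (s • g s u) = P s (u - P s u) := by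
  have h1 : P s (s • g s u) = s • g s (P s u) := by
    rw [ContinuousLinearMap.map_smul_of_tower, h.apply_eq hs (h.mem hs u)]
  have h2 := B.mem_graph_snd_inj (h.mem hs (s • g s u))
    (smul_mem_graph s (h.mem_sq hs (P s u))) h1
  rw [h2, smul_smul, smul_smul, map_sub]
  have : s * s * (s ^ 2)⁻¹ = 1 := by field_simp
  rw [this, one_smul]

lemma norm_sq_add (h : IsSquareResolvent B P g) {s : ℝ} (hs : 0 < s) (u : H) :
    ‖P s u‖ ^ 2 + ‖s • g s u‖ ^ 2 = (inner ℂ (P s u) u).re := by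
  have h1 := congrArg Complex.re (h.symm (h.mem hs u) (h.mem_sq hs u))
  rw [inner_smul_right_eq_smul, inner_sub_right] at h1
  simp only [inner_self_eq_norm_sq_to_K, Complex.sub_re, Complex.smul_re] at h1
  norm_cast at h1
  simp only [Complex.coe_algebraMap, Complex.ofReal_re, smul_eq_mul] at h1
  rw [norm_smul, mul_pow, h1, Real.norm_eq_abs, sq_abs]
  field_simp
  ring

lemma norm_apply_le (h : IsSquareResolvent B P g) {s : ℝ} (hs : 0 < s) (u : H) :
    ‖P s u‖ ≤ ‖u‖ := by
  have h1 := h.norm_sq_add hs u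
  have h2 := (Complex.re_le_norm _).trans (norm_inner_le_norm (𝕜 := ℂ) (P s u) u)
  by_contra! h3
  nlinarith [norm_nonneg u, sq_nonneg ‖s • g s u‖]

lemma norm_smul_le (h : IsSquareResolvent B P g) {s : ℝ} (hs : 0 < s) (u : H) :
    ‖s • g s u‖ ≤ ‖u‖ := by
  have h1 := h.norm_sq_add hs u
  have h2 := (Complex.re_le_norm _).trans (norm_inner_le_norm (𝕜 := ℂ) (P s u) u)
  by_contra! h3
  nlinarith [norm_nonneg u, norm_nonneg (P s u), h.norm_apply_le hs u]

lemma inner_apply_left (h : IsSquareResolvent B P g) {s : ℝ} (hs : 0 < s) (u v : H) :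
    inner ℂ (P s u) v = inner ℂ u (P s v) := by
  have h1 : inner ℂ (P s u) ((s ^ 2)⁻¹ • (v - P s v))
      = inner ℂ ((s ^ 2)⁻¹ • (u - P s u)) (P s v) := by
    rw [← h.symm (h.mem hs u) (h.mem_sq hs v), h.symm (h.mem_sq hs u) (h.mem hs v)]
  rw [inner_smul_right_eq_smul, inner_smul_left_eq_smul] at h1
  have h2 := smul_right_injective ℂ (inv_ne_zero (pow_ne_zero 2 hs.ne')) h1
  simp only [inner_sub_right, inner_sub_left] at h2
  linear_combination h2

lemma norm_smul_sq (h : IsSquareResolvent B P g) {s : ℝ} (hs : 0 < s) (u : H) :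
    ‖s • g s u‖ ^ 2 = (inner ℂ (P s (u - P s u)) u).re := by
  have h1 := h.norm_sq_add hs u
  rw [map_sub, inner_sub_left, Complex.sub_re, h.inner_apply_left hs (P s u) u]
  have : (inner ℂ (P s u) (P s u)).re = ‖P s u‖ ^ 2 := inner_self_eq_norm_sq (𝕜 := ℂ) (P s u)
  linarith

lemma apply_sub_apply (h : IsSquareResolvent B P g) {s t : ℝ} (hs : 0 < s) (ht : 0 < t) (u : H) :
    P s u - P t u = ((t ^ 2 - s ^ 2) / t ^ 2) • P s (u - P t u) := by
  have h1 := h.apply_add_smul hs (h.mem ht u) (h.mem_sq ht u)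
  have h2 : u - (P t u + s ^ 2 • (t ^ 2)⁻¹ • (u - P t u))
      = ((t ^ 2 - s ^ 2) / t ^ 2) • (u - P t u) := by
    have : (t ^ 2 - s ^ 2) / t ^ 2 = 1 - s ^ 2 * (t ^ 2)⁻¹ := by field_simp
    rw [this, sub_smul, one_smul, smul_smul]; abel
  rw [← ContinuousLinearMap.map_smul_of_tower, ← h2, map_sub, h1]

lemma norm_sub_apply_le (h : IsSquareResolvent B P g) {s : ℝ} (hs : 0 < s) {x y : H}
    (hxy : (x, y) ∈ B.graph) : ‖x - P s x‖ ≤ s * ‖y‖ := by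
  have h1 := h.mem hs y
  rw [h.apply_eq hs hxy] at h1
  have h2 := B.mem_graph_snd_inj (h.mem_sq hs x) h1 rfl
  have h3 : x - P s x = s • s • g s y := by
    rw [← h2, smul_smul, smul_smul]
    have : s * s * (s ^ 2)⁻¹ = 1 := by field_simp
    rw [this, one_smul]
  rw [h3, norm_smul, Real.norm_of_nonneg hs.le]
  exact mul_le_mul_of_nonneg_left (h.norm_smul_le hs y) hs.le

lemma norm_apply_le_inv_mul (h : IsSquareResolvent B P g) {s : ℝ} (hs : 0 < s) {x y : H}
    (hxy : (x, y) ∈ B.graph) : ‖P s y‖ ≤ s⁻¹ * ‖x‖ := by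
  have h1 := h.norm_smul_le hs x
  rw [norm_smul, Real.norm_of_nonneg hs.le] at h1
  rw [h.apply_eq hs hxy, ← div_eq_inv_mul, le_div_iff₀ hs, mul_comm]
  exact h1

lemma continuousAt_apply (h : IsSquareResolvent B P g) {t : ℝ} (ht : 0 < t) (u : H) :
    ContinuousAt (fun s => P s u) t := by
  rw [ContinuousAt, tendsto_iff_norm_sub_tendsto_zero]
  have h1 : Tendsto (fun s : ℝ => |(t ^ 2 - s ^ 2) / t ^ 2| * ‖u - P t u‖) (𝓝 t) (𝓝 0) := by
    have : Continuous fun s : ℝ => |(t ^ 2 - s ^ 2) / t ^ 2| * ‖u - P t u‖ := by fun_prop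
    simpa using this.tendsto t
  refine squeeze_zero' (Eventually.of_forall fun _ => norm_nonneg _) ?_ h1
  filter_upwards [lt_mem_nhds ht] with s hs
  rw [h.apply_sub_apply hs ht, norm_smul, Real.norm_eq_abs]
  exact mul_le_mul_of_nonneg_left (h.norm_apply_le hs _) (abs_nonneg _)

lemma hasDerivAt_apply (h : IsSquareResolvent B P g) {t : ℝ} (ht : 0 < t) (u : H) :
    HasDerivAt (fun s => P s u) ((-2 / t) • P t (u - P t u)) t := by
  rw [hasDerivAt_iff_tendsto_slope]
  have h1 : ContinuousAt (fun s : ℝ => (-(t + s) / t ^ 2) • P s (u - P t u)) t :=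
    ContinuousAt.smul (f := fun s : ℝ => -(t + s) / t ^ 2) (by fun_prop)
      (h.continuousAt_apply ht _)
  have h2 : -(t + t) / t ^ 2 = -2 / t := by field_simp; ring
  rw [ContinuousAt, h2] at h1
  refine (h1.mono_left nhdsWithin_le_nhds).congr' ?_
  filter_upwards [self_mem_nhdsWithin, mem_nhdsWithin_of_mem_nhds (lt_mem_nhds ht)] with s hne hs
  have hst : s - t ≠ 0 := sub_ne_zero.mpr hne
  rw [slope_def_module, h.apply_sub_apply hs ht, smul_smul]
  congr 1
  field_simp
  ring

lemma continuousAt_apply_sub (h : IsSquareResolvent B P g) {t : ℝ} (ht : 0 < t) (u : H) :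
    ContinuousAt (fun s => P s (u - P s u)) t := by
  set v := u - P t u with hv
  have hu := tendsto_iff_norm_sub_tendsto_zero.mp (h.continuousAt_apply ht u).tendsto
  have hv' := tendsto_iff_norm_sub_tendsto_zero.mp (h.continuousAt_apply ht v).tendsto
  rw [ContinuousAt, tendsto_iff_norm_sub_tendsto_zero]
  refine squeeze_zero' (Eventually.of_forall fun _ => norm_nonneg _) ?_ (by simpa using hu.add hv')
  filter_upwards [lt_mem_nhds ht] with s hs
  have e : P s (u - P s u) - P t v = -P s (P s u - P t u) + (P s v - P t v) := by
    rw [hv]; simp only [map_sub]; abel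
  rw [e]
  refine (norm_add_le _ _).trans (add_le_add_left ?_ _)
  rw [norm_neg]
  exact h.norm_apply_le hs _

lemma tendsto_zero_of_mem_closure {ι E F : Type*} [NormedAddCommGroup E] [NormedSpace ℂ E]
    [NormedAddCommGroup F] [NormedSpace ℂ F] {l : Filter ι} {L : ι → E →L[ℂ] F} {C : ℝ}
    (hC : ∀ᶠ i in l, ∀ x, ‖L i x‖ ≤ C * ‖x‖) {S : Set E}
    (hS : ∀ x ∈ S, Tendsto (fun i => L i x) l (𝓝 0)) {u : E} (hu : u ∈ closure S) :
    Tendsto (fun i => L i u) l (𝓝 0) := by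
  rw [Metric.tendsto_nhds]
  intro ε hε
  have hδ : 0 < ε / (2 * (|C| + 1)) := by positivity
  obtain ⟨x, hx, hux⟩ := Metric.mem_closure_iff.mp hu _ hδ
  filter_upwards [hC, Metric.tendsto_nhds.mp (hS x hx) (ε / 2) (by positivity)] with i h1 h2
  rw [dist_zero_right] at h2 ⊢
  rw [dist_eq_norm, lt_div_iff₀ (by positivity)] at hux
  have h3 := norm_add_le (L i (u - x)) (L i x)
  rw [← map_add, sub_add_cancel] at h3
  have h4 : C * ‖u - x‖ ≤ |C| * ‖u - x‖ := by gcongr; exact le_abs_self C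
  nlinarith [h1 (u - x), norm_nonneg (u - x)]

lemma tendsto_apply_nhdsGT_zero (h : IsSquareResolvent B P g) (hB : Dense (B.domain : Set H))
    (u : H) : Tendsto (fun s => P s u) (𝓝[>] 0) (𝓝 u) := by
  have h1 : Tendsto (fun s => (ContinuousLinearMap.id ℂ H - P s) u) (𝓝[>] (0 : ℝ)) (𝓝 0) := by
    refine tendsto_zero_of_mem_closure (C := 2) ?_ (S := B.domain) ?_ (hB u)
    · filter_upwards [self_mem_nhdsWithin] with s hs x
      have := norm_sub_le x (P s x)
      have := h.norm_apply_le hs x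
      simp only [sub_apply, ContinuousLinearMap.id_apply]
      linarith
    · intro x hx
      have h2 : Tendsto (fun s : ℝ => s * ‖B ⟨x, hx⟩‖) (𝓝[>] 0) (𝓝 0) := by
        have : Continuous fun s : ℝ => s * ‖B ⟨x, hx⟩‖ := by fun_prop
        simpa using (this.tendsto 0).mono_left nhdsWithin_le_nhds
      refine squeeze_zero_norm' ?_ h2
      filter_upwards [self_mem_nhdsWithin] with s hs
      exact h.norm_sub_apply_le hs (B.mem_graph ⟨x, hx⟩)
  simpa using h1.const_sub u

lemma tendsto_apply_atTop (h : IsSquareResolvent B P g) {u : H}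
    (hu : u ∈ closure (range fun v : B.domain => B v)) :
    Tendsto (fun s => P s u) atTop (𝓝 0) := by
  refine tendsto_zero_of_mem_closure (C := 1) ?_ ?_ hu
  · filter_upwards [eventually_gt_atTop 0] with s hs x
    simpa using h.norm_apply_le hs x
  · rintro _ ⟨v, rfl⟩
    have h2 : Tendsto (fun s : ℝ => s⁻¹ * ‖(v : H)‖) atTop (𝓝 0) := by
      simpa using tendsto_inv_atTop_zero.mul_const ‖(v : H)‖
    refine squeeze_zero_norm' ?_ h2
    filter_upwards [eventually_gt_atTop 0] with s hs
    exact h.norm_apply_le_inv_mul hs (B.mem_graph v)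

lemma continuousOn_norm_smul (h : IsSquareResolvent B P g) (u : H) :
    ContinuousOn (fun s => ‖s • g s u‖) (Ioi 0) := by
  have h1 : ContinuousOn (fun s => √(inner ℂ (P s (u - P s u)) u).re) (Ioi 0) := by
    intro s hs
    refine (Real.continuous_sqrt.continuousAt.comp (Complex.continuous_re.continuousAt.comp
      (ContinuousAt.inner (𝕜 := ℂ) (h.continuousAt_apply_sub hs u)
        continuousAt_const))).continuousWithinAt
  refine h1.congr fun s hs => ?_
  simp only [← h.norm_smul_sq hs, Real.sqrt_sq (norm_nonneg _)]

lemma integral_norm_smul_sq_div (h : IsSquareResolvent B P g) {a b : ℝ} (ha : 0 < a) (hab : a ≤ b)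
    (u : H) : ∫ s in a..b, ‖s • g s u‖ ^ 2 / s
      = ((inner ℂ (P a u) u).re - (inner ℂ (P b u) u).re) / 2 := by
  have hpos : ∀ s ∈ uIcc a b, 0 < s :=
    fun s hs => ha.trans_le (by rw [uIcc_of_le hab] at hs; exact hs.1)
  have h1 : ∀ s ∈ uIcc a b, HasDerivAt (fun s => -(inner ℂ (P s u) u).re / 2)
      (‖s • g s u‖ ^ 2 / s) s := by
    intro s hs
    have hs0 := hpos s hs
    have h2 := (h.hasDerivAt_apply hs0 u).inner ℂ (hasDerivAt_const s u)
    have h3 := (Complex.reCLM.hasFDerivAt.comp_hasDerivAt s h2).neg.div_const 2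
    have e : ‖s • g s u‖ ^ 2 / s = -Complex.reCLM (inner ℂ (P s u) 0
        + inner ℂ ((-2 / s) • P s (u - P s u)) u) / 2 := by
      rw [h.norm_smul_sq hs0, inner_smul_left_eq_smul, inner_zero_right, zero_add,
        Complex.reCLM_apply, Complex.smul_re, smul_eq_mul]
      field_simp
    rw [e]
    exact h3
  rw [intervalIntegral.integral_eq_sub_of_hasDerivAt h1]
  · ring
  · refine ContinuousOn.intervalIntegrable ?_
    exact (((h.continuousOn_norm_smul u).mono hpos).pow 2).div continuousOn_id
      fun s hs => (hpos s hs).ne'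

lemma lintegral_norm_smul_sq_div_le (h : IsSquareResolvent B P g) (u : H) :
    ∫⁻ s in Ioi (0 : ℝ), ENNReal.ofReal (‖s • g s u‖ ^ 2 / s) ≤ ENNReal.ofReal (‖u‖ ^ 2 / 2) := by
  have hcont : ContinuousOn (fun s => ‖s • g s u‖ ^ 2 / s) (Ioi 0) :=
    ((h.continuousOn_norm_smul u).pow 2).div continuousOn_id fun s hs => (ne_of_gt hs)
  have hcover : AECover (volume.restrict (Ioi (0 : ℝ))) atTop
      fun n : ℕ => Ioc (((n : ℝ) + 1)⁻¹) ((n : ℝ) + 1) := by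
    refine ⟨?_, fun n => measurableSet_Ioc⟩
    filter_upwards [ae_restrict_mem measurableSet_Ioi] with s hs
    have h1 : Tendsto (fun n : ℕ => (n : ℝ) + 1) atTop atTop :=
      tendsto_atTop_add_const_right _ _ tendsto_natCast_atTop_atTop
    filter_upwards [h1.eventually_ge_atTop s,
      (tendsto_inv_atTop_zero.comp h1).eventually_lt_const hs] with n h2 h3
    exact ⟨h3, h2⟩
  refine le_of_tendsto' (hcover.lintegral_tendsto_of_countably_generated
    (hcont.aemeasurable measurableSet_Ioi).ennreal_ofReal) fun n => ?_
  have hn : (0 : ℝ) < (n : ℝ) + 1 := by positivity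
  have ha : (0 : ℝ) < ((n : ℝ) + 1)⁻¹ := by positivity
  have hab : ((n : ℝ) + 1)⁻¹ ≤ (n : ℝ) + 1 := by
    have : (1 : ℝ) ≤ (n : ℝ) + 1 := by linarith [n.cast_nonneg (α := ℝ)]
    exact (inv_le_one_of_one_le₀ this).trans this
  have hsub : Icc (((n : ℝ) + 1)⁻¹) ((n : ℝ) + 1) ⊆ Ioi 0 := fun s hs => ha.trans_le hs.1
  rw [Measure.restrict_restrict measurableSet_Ioc,
    inter_eq_left.mpr (Ioc_subset_Icc_self.trans hsub), ← ofReal_integral_eq_lintegral_ofReal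
      (((hcont.mono hsub).integrableOn_Icc).mono_set Ioc_subset_Icc_self) ?_,
    ← intervalIntegral.integral_of_le hab, h.integral_norm_smul_sq_div ha hab]
  · refine ENNReal.ofReal_le_ofReal ?_
    have h1 := h.norm_sq_add hn u
    have h2 := (Complex.re_le_norm _).trans (norm_inner_le_norm (𝕜 := ℂ) (P ((n : ℝ) + 1)⁻¹ u) u)
    have h3 := h.norm_apply_le ha u
    nlinarith [norm_nonneg u, sq_nonneg ‖P ((n : ℝ) + 1) u‖,
      sq_nonneg ‖((n : ℝ) + 1) • g ((n : ℝ) + 1) u‖]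
  · filter_upwards [ae_restrict_mem measurableSet_Ioc] with s hs
    have : 0 < s := ha.trans hs.1
    simp only [Pi.zero_apply]
    positivity

/-- The identity `u = 2 ∫₀^∞ Ψ_s(B)² u ds/s` on the closure of the range of `B`, composed with a
bounded operator and combined with the triangle inequality for integrals. -/
lemma enorm_map_le_lintegral [CompleteSpace H] (h : IsSquareResolvent B P g)
    (hB : Dense (B.domain : Set H)) (T : H →L[ℂ] H) {u : H}
    (hu : u ∈ closure (range fun v : B.domain => B v)) :
    ‖T u‖ₑ ≤ ∫⁻ s in Ioi (0 : ℝ), ENNReal.ofReal (2 / s * ‖T (s • g s (s • g s u))‖) := by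
  have hlim : Tendsto (fun b : ℝ => ‖T (P b u) - T (P b⁻¹ u)‖ₑ) atTop (𝓝 ‖T u‖ₑ) := by
    have h1 := (h.tendsto_apply_nhdsGT_zero hB u).comp tendsto_inv_atTop_nhdsGT_zero
    have h2 := ((T.continuous.tendsto _).comp (h.tendsto_apply_atTop hu)).sub
      ((T.continuous.tendsto _).comp h1)
    simpa using h2.enorm
  refine le_of_tendsto hlim ?_
  filter_upwards [eventually_ge_atTop 1] with b hb
  have ha : 0 < b⁻¹ := by positivity
  have hab : b⁻¹ ≤ b := (inv_le_one_of_one_le₀ hb).trans hb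
  have hpos : ∀ s ∈ uIcc b⁻¹ b, 0 < s :=
    fun s hs => ha.trans_le (by rw [uIcc_of_le hab] at hs; exact hs.1)
  have hderiv : ∀ s ∈ uIcc b⁻¹ b,
      HasDerivAt (fun s => T (P s u)) (T ((-2 / s) • P s (u - P s u))) s := fun s hs =>
    (T.restrictScalars ℝ).hasFDerivAt.comp_hasDerivAt s (h.hasDerivAt_apply (hpos s hs) u)
  rw [← intervalIntegral.integral_eq_sub_of_hasDerivAt hderiv, intervalIntegral.integral_of_le hab]
  · refine (enorm_integral_le_lintegral_enorm _).trans ?_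
    refine (setLIntegral_mono' measurableSet_Ioc fun s hs => ?_).trans
      (lintegral_mono_set fun s hs => ha.trans hs.1)
    have hs0 : 0 < s := ha.trans hs.1
    rw [h.smul_smul_eq hs0, ContinuousLinearMap.map_smul_of_tower, ← ofReal_norm, norm_smul,
      norm_div, norm_neg, Real.norm_of_nonneg hs0.le, Real.norm_of_nonneg zero_le_two]
  · refine ContinuousOn.intervalIntegrable fun s hs => ContinuousAt.continuousWithinAt ?_
    refine T.continuous.continuousAt.comp ?_
    exact ContinuousAt.smul (f := fun s : ℝ => -2 / s)
      (continuousAt_const.div continuousAt_id (hpos s hs).ne')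
      (h.continuousAt_apply_sub (hpos s hs) u)

end IsSquareResolvent

lemma lintegral_Ioi_comp_const_div {t : ℝ} (ht : 0 < t) (f : ℝ → ℝ≥0∞) :
    ∫⁻ s in Ioi (0 : ℝ), ENNReal.ofReal (t / s ^ 2) * f (t / s) = ∫⁻ r in Ioi (0 : ℝ), f r := by
  have himage : (fun s : ℝ => t / s) '' Ioi 0 = Ioi 0 := by
    ext r
    refine ⟨?_, fun hr => ⟨t / r, div_pos ht hr, div_div_cancel₀ ht.ne'⟩⟩
    rintro ⟨s, hs, rfl⟩
    exact div_pos ht hs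
  have hderiv : ∀ s ∈ Ioi (0 : ℝ), HasDerivWithinAt (fun s => t / s) (-(t / s ^ 2)) (Ioi 0) s := by
    intro s hs
    have h1 := ((hasDerivAt_inv (ne_of_gt hs)).const_mul t).hasDerivWithinAt (s := Ioi 0)
    simpa only [div_eq_mul_inv, mul_neg] using h1
  have hinj : InjOn (fun s : ℝ => t / s) (Ioi 0) := fun a _ b _ hab => by
    simpa [div_div_cancel₀ ht.ne'] using congrArg (t / ·) hab
  have h1 := lintegral_image_eq_lintegral_abs_deriv_mul measurableSet_Ioi hderiv hinj f
  rw [himage] at h1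
  rw [h1]
  refine setLIntegral_congr_fun measurableSet_Ioi fun s _ => ?_
  simp only [abs_neg]
  rw [abs_of_nonneg (by positivity)]

lemma lintegral_Ioi_comp_div_const {s : ℝ} (hs : 0 < s) (f : ℝ → ℝ≥0∞) :
    ∫⁻ t in Ioi (0 : ℝ), ENNReal.ofReal s⁻¹ * f (t / s) = ∫⁻ r in Ioi (0 : ℝ), f r := by
  have himage : (fun t : ℝ => t / s) '' Ioi 0 = Ioi 0 := by
    ext r
    refine ⟨?_, fun hr => ⟨r * s, mul_pos hr hs, mul_div_cancel_right₀ _ hs.ne'⟩⟩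
    rintro ⟨t, ht, rfl⟩
    exact div_pos ht hs
  have hderiv : ∀ t ∈ Ioi (0 : ℝ), HasDerivWithinAt (fun t => t / s) s⁻¹ (Ioi 0) t := fun t _ => by
    simpa using ((hasDerivAt_id t).div_const s).hasDerivWithinAt (s := Ioi 0)
  have hinj : InjOn (fun t : ℝ => t / s) (Ioi 0) := fun a _ b _ hab =>
    (div_left_inj' hs.ne').mp hab
  have h1 := lintegral_image_eq_lintegral_abs_deriv_mul measurableSet_Ioi hderiv hinj f
  rw [himage] at h1
  rw [h1, abs_of_nonneg (inv_nonneg.mpr hs.le)]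

lemma sq_lintegral_mul_le {α : Type*} [MeasurableSpace α] (μ : Measure α) {k f : α → ℝ≥0∞}
    (hk : AEMeasurable k μ) (hf : AEMeasurable f μ) :
    (∫⁻ x, k x * f x ∂μ) ^ 2 ≤ (∫⁻ x, k x ∂μ) * ∫⁻ x, k x * f x ^ 2 ∂μ := by
  have h1 := ENNReal.lintegral_mul_le_Lp_mul_Lq μ Real.HolderConjugate.two_two
    (hk.pow_const (1 / 2 : ℝ)) ((hk.pow_const (1 / 2 : ℝ)).mul hf)
  have hsq : ∀ x : ℝ≥0∞, (x ^ (1 / 2 : ℝ)) ^ 2 = x := fun x => by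
    rw [← ENNReal.rpow_natCast, ← ENNReal.rpow_mul]; norm_num
  have e : ∀ x, k x ^ (1 / 2 : ℝ) * (k x ^ (1 / 2 : ℝ) * f x) = k x * f x := fun x => by
    rw [← mul_assoc, ← sq, hsq]
  simp only [Pi.mul_apply, e, ENNReal.rpow_two, mul_pow, hsq] at h1
  calc _ ≤ _ := pow_le_pow_left' h1 2
    _ = _ := by rw [mul_pow, hsq, hsq]

/-- The Schur test for the kernel `ζ(t/s)` with respect to the measure `ds/s` on `(0, ∞)`. -/
lemma lintegral_sq_div_le_of_kernel {ζ : ℝ → ℝ} (hζ : Measurable ζ)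
    {Z : ℝ≥0∞} (hZ : ∫⁻ r in Ioi (0 : ℝ), ENNReal.ofReal (ζ r / r) = Z) (hZfin : Z ≠ ⊤)
    {N w : ℝ → ℝ≥0∞} (hw : AEMeasurable w (volume.restrict (Ioi 0))) {c : ℝ≥0∞} (hc : c ≠ ⊤)
    (hN : ∀ t, 0 < t → N t ≤ c * ∫⁻ s in Ioi (0 : ℝ), ENNReal.ofReal (ζ (t / s) / s) * w s) :
    ∫⁻ t in Ioi (0 : ℝ), N t ^ 2 * ENNReal.ofReal t⁻¹
      ≤ c ^ 2 * Z ^ 2 * ∫⁻ s in Ioi (0 : ℝ), w s ^ 2 * ENNReal.ofReal s⁻¹ := by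
  set z : ℝ → ℝ≥0∞ := fun r => ENNReal.ofReal (ζ r / r)
  have hrow : ∀ t, 0 < t → ∫⁻ s in Ioi (0 : ℝ), ENNReal.ofReal (ζ (t / s) / s) = Z := by
    intro t ht
    rw [← hZ, ← lintegral_Ioi_comp_const_div ht z]
    refine setLIntegral_congr_fun measurableSet_Ioi fun s (hs : 0 < s) => ?_
    rw [← ENNReal.ofReal_mul (by positivity)]
    congr 1
    field_simp
  have hcol : ∀ s, 0 < s →
      ∫⁻ t in Ioi (0 : ℝ), ENNReal.ofReal (ζ (t / s) / s) * ENNReal.ofReal t⁻¹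
        = Z * ENNReal.ofReal s⁻¹ := by
    intro s hs
    rw [← hZ, ← lintegral_Ioi_comp_div_const hs z,
      ← lintegral_mul_const' _ _ ENNReal.ofReal_ne_top]
    refine setLIntegral_congr_fun measurableSet_Ioi fun t (ht : 0 < t) => ?_
    have hs' : 0 ≤ s⁻¹ := inv_nonneg.mpr hs.le
    rw [← ENNReal.ofReal_mul' (inv_nonneg.mpr ht.le), ← ENNReal.ofReal_mul hs',
      ← ENNReal.ofReal_mul' hs']
    congr 1
    field_simp
  have hpt : ∀ t, 0 < t → N t ^ 2 * ENNReal.ofReal t⁻¹ ≤ c ^ 2 * Z *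
      ∫⁻ s in Ioi (0 : ℝ),
        w s ^ 2 * (ENNReal.ofReal (ζ (t / s) / s) * ENNReal.ofReal t⁻¹) := by
    intro t ht
    have hk : Measurable fun s : ℝ => ENNReal.ofReal (ζ (t / s) / s) := by fun_prop
    have h1 := sq_lintegral_mul_le (volume.restrict (Ioi 0)) hk.aemeasurable hw
    rw [hrow t ht] at h1
    calc N t ^ 2 * ENNReal.ofReal t⁻¹
        ≤ (c * ∫⁻ s in Ioi (0 : ℝ), ENNReal.ofReal (ζ (t / s) / s) * w s) ^ 2
            * ENNReal.ofReal t⁻¹ := by gcongr; exact hN t ht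
      _ ≤ c ^ 2 * (Z * ∫⁻ s in Ioi (0 : ℝ), ENNReal.ofReal (ζ (t / s) / s) * w s ^ 2)
            * ENNReal.ofReal t⁻¹ := by rw [mul_pow]; gcongr
      _ = c ^ 2 * Z * ((∫⁻ s in Ioi (0 : ℝ), ENNReal.ofReal (ζ (t / s) / s) * w s ^ 2)
            * ENNReal.ofReal t⁻¹) := by ring
      _ = _ := by
        rw [← lintegral_mul_const' _ _ ENNReal.ofReal_ne_top]
        congr 1
        refine lintegral_congr fun s => ?_
        ring
  have hmeas : AEMeasurable (Function.uncurry fun t s : ℝ =>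
      w s ^ 2 * (ENNReal.ofReal (ζ (t / s) / s) * ENNReal.ofReal t⁻¹))
      ((volume.restrict (Ioi 0)).prod (volume.restrict (Ioi 0))) := by
    refine AEMeasurable.mul (hw.comp_snd.pow_const 2) (Measurable.aemeasurable ?_)
    fun_prop
  calc _ ≤ _ := setLIntegral_mono' measurableSet_Ioi hpt
    _ = c ^ 2 * Z * ∫⁻ s in Ioi (0 : ℝ), w s ^ 2 * (Z * ENNReal.ofReal s⁻¹) := by
      rw [lintegral_const_mul' _ _ (ENNReal.mul_ne_top (ENNReal.pow_ne_top hc) hZfin),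
        lintegral_lintegral_swap hmeas]
      congr 1
      refine setLIntegral_congr_fun measurableSet_Ioi fun s (hs : 0 < s) => ?_
      rw [lintegral_const_mul _ (by fun_prop), hcol s hs]
    _ = _ := by
      have : ∀ s, w s ^ 2 * (Z * ENNReal.ofReal s⁻¹) = Z * (w s ^ 2 * ENNReal.ofReal s⁻¹) :=
        fun s => by ring
      simp only [this]
      rw [lintegral_const_mul' _ _ hZfin]
      ring

/-- **Schur-type estimate**: let `B` be a densely defined self-adjoint operator on a complex
Hilbert space, `P_t = (1 + t²B²)^{-1}`, and `g s u = B(P_s u)` (so that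
`s • g s u = Ψ_s(B)u = sB(1+s²B²)^{-1}u`). If a measurable family `(T_t)` of bounded operators
satisfies `‖T_t Ψ_s(B) u‖ ≤ ζ(t/s) ‖u‖` with `Z = ∫₀^∞ ζ(r) dr/r < ∞`, then
`∫₀^∞ ‖T_t u‖² dt/t ≤ 2 Z² ‖u‖²` for `u` in the closure of the range of `B`. -/
theorem schur_type_estimate
    (H : Type*) [NormedAddCommGroup H] [InnerProductSpace ℂ H] [CompleteSpace H]
    [MeasurableSpace H] [BorelSpace H]
    (B : H →ₗ.[ℂ] H)
    (hdense : Dense (B.domain : Set H))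
    (hsa : IsSelfAdjoint B)
    (P : ℝ → H →L[ℂ] H)
    (hP : ∀ t : ℝ, 0 < t → ∀ u : H, ∃ h₁ : P t u ∈ B.domain,
      ∃ h₂ : B ⟨P t u, h₁⟩ ∈ B.domain,
        P t u + ((t : ℂ) ^ 2) • B ⟨B ⟨P t u, h₁⟩, h₂⟩ = u)
    (g : ℝ → H → H)
    (hg : ∀ s : ℝ, 0 < s → ∀ u : H, ∃ h : P s u ∈ B.domain, g s u = B ⟨P s u, h⟩)
    (T : ℝ → H →L[ℂ] H)
    (hTmeas : ∀ u : H, Measurable fun t : ℝ => T t u)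
    (ζ : ℝ → ℝ) (hζmeas : Measurable ζ) (hζ0 : ∀ r : ℝ, 0 < r → 0 ≤ ζ r)
    (Z : ℝ≥0∞) (hZ : ∫⁻ r in Set.Ioi (0 : ℝ), ENNReal.ofReal (ζ r / r) = Z) (hZfin : Z ≠ ⊤)
    (hbound : ∀ s t : ℝ, 0 < s → 0 < t → ∀ u : H,
      ‖T t (s • g s u)‖ ≤ ζ (t / s) * ‖u‖) :
    ∀ u ∈ closure (Set.range fun v : B.domain => B v),
      ∫⁻ t in Set.Ioi (0 : ℝ), ENNReal.ofReal (‖T t u‖ ^ 2 / t) ≤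
        2 * Z ^ 2 * ENNReal.ofReal (‖u‖ ^ 2) := by
  have hR : IsSquareResolvent B P g := by
    have hsymm := LinearPMap.adjoint_isFormalAdjoint hdense
    rw [LinearPMap.isSelfAdjoint_def.mp hsa] at hsymm
    refine ⟨?_, ?_, ?_⟩
    · intro x y x' y' h1 h2
      obtain ⟨a, rfl, rfl⟩ := B.mem_graph_iff.mp h1
      obtain ⟨b, rfl, rfl⟩ := B.mem_graph_iff.mp h2
      exact hsymm a b
    · intro s hs u
      obtain ⟨h1, h2⟩ := hg s hs u
      rw [h2]
      exact B.mem_graph ⟨P s u, h1⟩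
    · intro s hs u
      obtain ⟨h1, h2⟩ := hg s hs u
      obtain ⟨_, h3, h4⟩ := hP s hs u
      have h5 : (s ^ 2)⁻¹ • (u - P s u) = B ⟨B ⟨P s u, h1⟩, h3⟩ := by
        rw [inv_smul_eq_iff₀ (pow_ne_zero 2 hs.ne'), sub_eq_iff_eq_add']
        rw [← Complex.ofReal_pow, Complex.coe_smul] at h4
        exact h4.symm
      rw [h2, h5]
      exact B.mem_graph ⟨B ⟨P s u, h1⟩, h3⟩
  intro u hu
  have hw : AEMeasurable (fun s => ENNReal.ofReal ‖s • g s u‖) (volume.restrict (Ioi 0)) :=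
    ((hR.continuousOn_norm_smul u).aemeasurable measurableSet_Ioi).ennreal_ofReal
  have hN : ∀ t, 0 < t → ENNReal.ofReal ‖T t u‖ ≤ 2 * ∫⁻ s in Ioi (0 : ℝ),
      ENNReal.ofReal (ζ (t / s) / s) * ENNReal.ofReal ‖s • g s u‖ := by
    intro t ht
    rw [ofReal_norm, ← lintegral_const_mul' _ _ (by simp)]
    refine (hR.enorm_map_le_lintegral hdense (T t) hu).trans
      (setLIntegral_mono' measurableSet_Ioi fun s (hs : 0 < s) => ?_)
    have h0 := hζ0 (t / s) (div_pos ht hs)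
    rw [← ENNReal.ofReal_mul (by positivity), ← ENNReal.ofReal_ofNat,
      ← ENNReal.ofReal_mul zero_le_two]
    refine ENNReal.ofReal_le_ofReal ?_
    calc 2 / s * ‖T t (s • g s (s • g s u))‖ ≤ 2 / s * (ζ (t / s) * ‖s • g s u‖) := by
          gcongr; exact hbound s t hs ht _
      _ = _ := by ring
  have hconv : ∀ f : ℝ → ℝ, (∀ t, 0 ≤ f t) →
      ∫⁻ t in Ioi (0 : ℝ), ENNReal.ofReal (f t ^ 2 / t)
        = ∫⁻ t in Ioi (0 : ℝ), ENNReal.ofReal (f t) ^ 2 * ENNReal.ofReal t⁻¹ := by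
    intro f hf
    refine lintegral_congr fun t => ?_
    rw [← ENNReal.ofReal_pow (hf t), ← ENNReal.ofReal_mul (by positivity), div_eq_mul_inv]
  rw [hconv _ fun t => norm_nonneg _]
  refine (lintegral_sq_div_le_of_kernel hζmeas hZ hZfin hw (by simp) hN).trans ?_
  rw [← hconv _ fun t => norm_nonneg _]
  calc _ ≤ 2 ^ 2 * Z ^ 2 * ENNReal.ofReal (‖u‖ ^ 2 / 2) := by
        gcongr; exact hR.lintegral_norm_smul_sq_div_le u
    _ = 2 * Z ^ 2 * (2 * ENNReal.ofReal (‖u‖ ^ 2 / 2)) := by ring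
    _ = _ := by
      rw [← ENNReal.ofReal_ofNat, ← ENNReal.ofReal_mul zero_le_two]
      congr 2
      ring
end
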